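/- (Subadditivity, Palatini–Zak) Let X ⊂ P^r be a smooth, irreducible, non-degenerate variety of dimension n, and let k_0 be the least k with S^k(X) = P^r. Then ψ_1 ≤ ψ_2 ≤ ⋯ ≤ ψ_{k_0} ≤ n and ψ_k ≥ ψ_{k-1} + ψ_1 for all k ≤ k_0; consequently ψ_k ≥ k·ψ_1 for all k ≤ k_0. -/

import Mathlib

open MvPolynomial Classical

noncomputable section

/-- A subset of affine space is algebraic if it is the zero locus of a set of polynomials. -/
def IsAlg {N : ℕ} (S : Set (Fin N → ℂ)) : Prop :=
  ∃ I : Set (MvPolynomial (Fin N) ℂ), S = {x | ∀ f ∈ I, eval x f = 0}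

/-- Zariski closure. -/
def zcl {N : ℕ} (S : Set (Fin N → ℂ)) : Set (Fin N → ℂ) :=
  ⋂₀ {T | IsAlg T ∧ S ⊆ T}

/-- Affine cones (over projective sets). -/
def IsCone {N : ℕ} (S : Set (Fin N → ℂ)) : Prop :=
  (0 : Fin N → ℂ) ∈ S ∧ ∀ c : ℂ, ∀ x ∈ S, c • x ∈ S

/-- Irreducible algebraic subsets. -/
def IrrAlg {N : ℕ} (S : Set (Fin N → ℂ)) : Prop :=
  IsAlg S ∧ S.Nonempty ∧ ∀ T₁ T₂ : Set (Fin N → ℂ), IsAlg T₁ → IsAlg T₂ →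
    S ⊆ T₁ ∪ T₂ → (S ⊆ T₁ ∨ S ⊆ T₂)

/-- Non-degenerate: the cone spans the ambient space. -/
def Nondeg {N : ℕ} (S : Set (Fin N → ℂ)) : Prop :=
  Submodule.span ℂ S = ⊤

/-- Projective dimension of (the projectivization of) a cone `S`,
defined as the Krull dimension of the poset of irreducible algebraic
subcones of `S` different from `{0}`. -/
noncomputable def pdim {N : ℕ} (S : Set (Fin N → ℂ)) : WithBot ℕ∞ :=
  Order.krullDim {T : Set (Fin N → ℂ) // IrrAlg T ∧ IsCone T ∧ T ≠ {0} ∧ T ⊆ S}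

/-- Cast a natural number into `WithBot ℕ∞`. -/
def nn (a : ℕ) : WithBot ℕ∞ := ((a : ℕ∞) : WithBot ℕ∞)

/-- Join of two cones. -/
def joinSet {N : ℕ} (S T : Set (Fin N → ℂ)) : Set (Fin N → ℂ) :=
  zcl {x | ∃ u ∈ S, ∃ v ∈ T, x = u + v}

/-- `secant k S` is (the cone over) the `k`-secant variety `S^k(X) = J(X^{k+1})`. -/
def secant {N : ℕ} : ℕ → Set (Fin N → ℂ) → Set (Fin N → ℂ)
  | 0, S => zcl S
  | (k+1), S => joinSet (secant k S) S

/-- Join of a finite family of cones. -/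
def joinFam {N m : ℕ} (F : Fin m → Set (Fin N → ℂ)) : Set (Fin N → ℂ) :=
  zcl {x | ∃ q : Fin m → Fin N → ℂ, (∀ i, q i ∈ F i) ∧ x = ∑ i, q i}

/-- Irreducible components. -/
def IsComponent {N : ℕ} (S T : Set (Fin N → ℂ)) : Prop :=
  IrrAlg T ∧ T ⊆ S ∧ ∀ T', IrrAlg T' → T' ⊆ S → T ⊆ T' → T = T'

/-- Union of the irreducible components of `S` through `x`. -/
def compThrough {N : ℕ} (S : Set (Fin N → ℂ)) (x : Fin N → ℂ) : Set (Fin N → ℂ) :=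
  ⋃₀ {T | IsComponent S T ∧ x ∈ T}

/-- Pure (equidimensional) sets. -/
def IsPure {N : ℕ} (S : Set (Fin N → ℂ)) : Prop :=
  ∀ T T', IsComponent S T → IsComponent S T' → pdim T = pdim T'

/-- Secant variety in the convention for possibly reducible varieties:
union of the joins of `k+1` distinct irreducible components (and the usual
secant variety in the irreducible case). -/
def SecantD {N : ℕ} (k : ℕ) (Y : Set (Fin N → ℂ)) : Set (Fin N → ℂ) :=
  (⋃₀ {J | ∃ T : Fin (k+1) → Set (Fin N → ℂ),
      (∀ i, IsComponent Y (T i)) ∧ Function.Injective T ∧ J = joinFam T})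
  ∪ {x | IrrAlg Y ∧ x ∈ secant k Y}

/-- The (cone over the) embedded tangent space at `x`: directions annihilated by the
differentials at `x` of all polynomials vanishing on `S`. -/
def embTangent {N : ℕ} (S : Set (Fin N → ℂ)) (x : Fin N → ℂ) : Set (Fin N → ℂ) :=
  {v | ∀ f : MvPolynomial (Fin N) ℂ, (∀ y ∈ S, eval y f = 0) →
      ∑ i, v i * eval x (pderiv i f) = 0}

def tanSpan {N : ℕ} (S : Set (Fin N → ℂ)) (x : Fin N → ℂ) : Submodule ℂ (Fin N → ℂ) :=
  Submodule.span ℂ (embTangent S x)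

/-- `x` is a smooth point of the `n`-dimensional projective variety with cone `S`. -/
def IsSmoothAt {N : ℕ} (S : Set (Fin N → ℂ)) (n : ℕ) (x : Fin N → ℂ) : Prop :=
  Module.finrank ℂ (tanSpan S x) = n + 1

/-- Algebraic subsets of tuple spaces. -/
def IsAlgT {N m : ℕ} (S : Set (Fin m → Fin N → ℂ)) : Prop :=
  ∃ I : Set (MvPolynomial (Fin m × Fin N) ℂ),
    S = {q | ∀ f ∈ I, eval (fun p => q p.1 p.2) f = 0}

/-- `P` holds for general (tuples of) points of `X`. -/
def Generically {N : ℕ} (m : ℕ) (X : Set (Fin N → ℂ))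
    (P : (Fin m → Fin N → ℂ) → Prop) : Prop :=
  ∃ B : Set (Fin m → Fin N → ℂ), IsAlgT B ∧ ¬ ({q | ∀ i, q i ∈ X} ⊆ B) ∧
    ∀ q : Fin m → Fin N → ℂ, (∀ i, q i ∈ X ∧ q i ≠ 0) → q ∉ B → P q

/-- `P` holds for general points of the set `S`. -/
def GenericallyOn {N : ℕ} (S : Set (Fin N → ℂ)) (P : (Fin N → ℂ) → Prop) : Prop :=
  ∃ B : Set (Fin N → ℂ), IsAlg B ∧ ¬ (S ⊆ B) ∧ ∀ x ∈ S, x ∉ B → x ≠ 0 → P x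

/-- `L` is `J_k`-tangent to `X` along `Y`: for every analytic arc of a point of `X`
and `s ≤ k` points of `Y`, linearly independent off `0`, with the `X`-point off `L`
for `t ≠ 0` and on `L` at `t = 0`, the flat limit of the spanned `s`-space
(described through analytic selections of vectors) lies in `L`. -/
def JkTangent {N : ℕ} (k : ℕ) (X Y : Set (Fin N → ℂ))
    (L : Submodule ℂ (Fin N → ℂ)) : Prop :=
  ∀ s : ℕ, 1 ≤ s → s ≤ k → ∀ q : Fin (s+1) → ℂ → (Fin N → ℂ), ∀ ε : ℝ, 0 < ε →
    (∀ i, AnalyticOnNhd ℂ (q i) (Metric.ball 0 ε)) →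
    (∀ t ∈ Metric.ball (0:ℂ) ε, q 0 t ∈ X) →
    (∀ i : Fin (s+1), i ≠ 0 → ∀ t ∈ Metric.ball (0:ℂ) ε, q i t ∈ Y) →
    (∀ t ∈ Metric.ball (0:ℂ) ε, t ≠ 0 → LinearIndependent ℂ (fun i => q i t)) →
    (∀ t ∈ Metric.ball (0:ℂ) ε, t ≠ 0 → q 0 t ∉ L) →
    q 0 0 ∈ L →
    ∀ w : ℂ → (Fin N → ℂ), AnalyticOnNhd ℂ w (Metric.ball 0 ε) →
      (∀ t ∈ Metric.ball (0:ℂ) ε, t ≠ 0 →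
        w t ∈ Submodule.span ℂ (Set.range (fun i => q i t))) →
      w 0 ∈ L

/-- `X` is `k`-smooth along `Y`: it is smooth along `Y` and any arc-limit
scheme of `m ≤ k+1` points of `X` supported on `Y` spans the right dimension,
i.e. pairwise non-proportional arcs of points stay linearly independent. -/
def KSmoothAlong {N : ℕ} (k n : ℕ) (X Y : Set (Fin N → ℂ)) : Prop :=
  (∀ y ∈ Y, y ≠ 0 → IsSmoothAt X n y) ∧
  ∀ m : ℕ, 2 ≤ m → m ≤ k + 1 → ∀ q : Fin m → ℂ → (Fin N → ℂ), ∀ ε : ℝ, 0 < ε →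
    (∀ i, AnalyticOnNhd ℂ (q i) (Metric.ball 0 ε)) →
    (∀ i, ∀ t ∈ Metric.ball (0:ℂ) ε, q i t ∈ X) →
    (∀ i, q i 0 ∈ Y ∧ q i 0 ≠ 0) →
    (∀ t ∈ Metric.ball (0:ℂ) ε, t ≠ 0 → ∀ i j : Fin m, i ≠ j →
        ∀ c : ℂ, q i t ≠ c • q j t) →
    ∀ t ∈ Metric.ball (0:ℂ) ε, t ≠ 0 → LinearIndependent ℂ (fun i => q i t)

def KSmooth {N : ℕ} (k n : ℕ) (X : Set (Fin N → ℂ)) : Prop := KSmoothAlong k n X X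

/-- The hyperplane with coefficient vector `c`. -/
def hypSub {N : ℕ} (c : Fin N → ℂ) : Submodule ℂ (Fin N → ℂ) :=
  LinearMap.ker (Finset.univ.sum fun i => c i • (LinearMap.proj i : (Fin N → ℂ) →ₗ[ℂ] ℂ))

/-- The hyperplane with coefficients `c` is tangent to `X` at the points `p j`. -/
def TangentHypAt {N m : ℕ} (X : Set (Fin N → ℂ)) (p : Fin m → Fin N → ℂ)
    (c : Fin N → ℂ) : Prop :=
  c ≠ 0 ∧ ∀ j, embTangent X (p j) ⊆ ↑(hypSub c)

/-- The tangential contact locus `Γ_{p_0,…,p_m}`: union of the irreducible components,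
through the points `p j`, of the closure of the locus of smooth points whose tangent
space lies in the span of the tangent spaces at the `p j` (`= T_{S^m(X),x}` by Terracini). -/
def GammaLocus {N m : ℕ} (X : Set (Fin N → ℂ)) (n : ℕ)
    (p : Fin m → Fin N → ℂ) : Set (Fin N → ℂ) :=
  ⋃₀ {T | IsComponent (zcl {q | q ∈ X ∧ q ≠ 0 ∧ IsSmoothAt X n q ∧
      embTangent X q ⊆ ↑(Submodule.span ℂ (⋃ j, embTangent X (p j)))}) T ∧ ∃ j, p j ∈ T}

/-- The projection contact locus `Ψ_{p_0,…,p_j}`: the component through `p 0` of the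
fibre through `p 0` of the tangential projection from `T_{X,p_1,…,p_j}`. -/
def PsiLocus {N j : ℕ} (X : Set (Fin N → ℂ))
    (p : Fin (j+1) → Fin N → ℂ) : Set (Fin N → ℂ) :=
  compThrough (X ∩ ↑(Submodule.span ℂ
    ((⋃ i : Fin j, embTangent X (p i.succ)) ∪ {p 0}))) (p 0)

/-- `X` is an `R_k`-variety: for `1 ≤ i ≤ k` and general points `p_0,…,p_i`, the
general hyperplane tangent to `X` at these points is `J_i`-tangent to `X` along the
tangential `i`-contact locus. -/
def RkVariety {N : ℕ} (k n : ℕ) (X : Set (Fin N → ℂ)) : Prop :=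
  ∀ i : ℕ, 1 ≤ i → i ≤ k →
    Generically (i+1) X fun p =>
      ∃ B : Set (Fin N → ℂ), IsAlg B ∧ ¬ ({c | TangentHypAt X p c} ⊆ B) ∧
        ∀ c, TangentHypAt X p c → c ∉ B → JkTangent i X (GammaLocus X n p) (hypSub c)

/-- The entry locus of `x` with respect to the `k`-secant variety of `X`. -/
def EntryLocus {N : ℕ} (k : ℕ) (X : Set (Fin N → ℂ)) (x : Fin N → ℂ) :
    Set (Fin N → ℂ) :=
  zcl {z | z ∈ X ∧ z ≠ 0 ∧ ∃ x' ∈ secant (k-1) X, x' ∉ Submodule.span ℂ {z} ∧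
      x ∈ Submodule.span ℂ ({z, x'} : Set (Fin N → ℂ))}

/-- `k`-Severi varieties: irreducible, non-degenerate `R_k`-varieties of dimension `n`
with `dim S^k(X) < r` and `dim S^k(X) = (k+2)n/2 + k`. -/
def KSeveri {N : ℕ} (k n : ℕ) (X : Set (Fin N → ℂ)) : Prop :=
  IrrAlg X ∧ IsCone X ∧ X ≠ {0} ∧ Nondeg X ∧ pdim X = nn n ∧
  RkVariety k n X ∧
  pdim (secant k X) < pdim (Set.univ : Set (Fin N → ℂ)) ∧
  pdim (secant k X) + pdim (secant k X) = nn ((k+2)*n + 2*k)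

/-!
Let `T i` be the tangent space of the cone `X` at the point `p i` of a general tuple. The projection
from `T 1 + ⋯ + T j` has constant rank near `p 0`, so its fibre through `p 0` has projective
dimension `dim (T 0 ∩ (T 1 + ⋯ + T j))`, which is therefore `ψ j`. Superadditivity amounts to
`T 0 ∩ T 1 ∩ (T 2 + ⋯ + T (j + 1)) = 0`: then `T 0 ∩ (T 2 + ⋯ + T (j + 1))` and `T 0 ∩ T 1` are
independent subspaces of `T 0 ∩ (T 1 + ⋯ + T (j + 1))`.

A nonzero vector common to the three spaces moves the general tuple with `p 0 + p 1` and
`p 1 + ⋯ + p (j + 1)` fixed to first order: it gives a derivation `D` of the function field of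
`X ^ (j + 2)` that kills both sums but not `p 1`. Over the constants of `D`, some valuation ring
contains all these constants but not every coordinate of `p 1`, so that `p 1` escapes to infinity
while `z = p 0 + p 1` and the gradient `h`, at `p 1 + ⋯ + p (j + 1)`, of an equation of the `j`-th
secant variety stay finite. The points `p 1` and `-p 0 = p 1 - z` of the cone have the same limit
in projective space and `X` is smooth there, so `z` becomes tangent to `X` at this limit, while `h`
annihilates the tangent space there because it annihilates `T 1`. Hence `h · z` vanishes in the
limit. But `h · z = h · p 0` is a constant of `D`, nonzero since `X` is nondegenerate, hence a unit.
-/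

section CommutativeAlgebra

lemma height_mvPolynomial_fin_of_isMaximal {k : Type*} [Field k] {s : ℕ}
    (m : Ideal (MvPolynomial (Fin s) k)) (hm : m.IsMaximal) : m.height = s := by
  induction s with
  | zero =>
    have hfield : IsField (MvPolynomial (Fin 0) k) :=
      (isEmptyRingEquiv k (Fin 0)).toMulEquiv.isField (Field.toIsField k)
    obtain rfl : m = ⊥ := by
      by_contra h
      exact Ring.not_isField_of_ne_of_ne h hm.ne_top hfield
    simp [Ideal.height_bot]
  | succ s ih =>
    let e := (finSuccEquiv k s).toRingEquiv
    have hm' : (m.map e).IsMaximal := Ideal.map_isMaximal_of_equiv e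
    let p : Ideal (MvPolynomial (Fin s) k) := (m.map e).comap Polynomial.C
    have hp : p.IsMaximal := Polynomial.isMaximal_comap_C_of_isJacobsonRing (m.map e)
    have : (m.map e).LiesOver p := ⟨rfl⟩
    rw [← RingEquiv.height_map e m, Polynomial.height_eq_height_add_one p (m.map e), ih p hp,
      Nat.cast_succ]

lemma ringKrullDim_le_of_isIntegral (R A : Type*) [CommRing R] [CommRing A] [Algebra R A]
    [Algebra.IsIntegral R A] : ringKrullDim A ≤ ringKrullDim R := by
  refine Order.krullDim_le_of_strictMono (PrimeSpectrum.comap (algebraMap R A)) fun P Q hPQ => ?_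
  obtain ⟨x, hx⟩ := Set.exists_of_ssubset hPQ
  exact Ideal.comap_lt_comap_of_integral_mem_sdiff (I := P.asIdeal) (J := Q.asIdeal)
    hPQ.le hx (Algebra.IsIntegral.isIntegral _)

lemma height_eq_ringKrullDim_of_isMaximal (k : Type*) {A : Type*} [Field k] [CommRing A]
    [IsDomain A] [Algebra k A] [Algebra.FiniteType k A] (m : Ideal A) [hm : m.IsMaximal] :
    (m.height : WithBot ℕ∞) = ringKrullDim A := by
  obtain ⟨s, g, hg, hi⟩ := exists_integral_inj_algHom_of_fg k A
  algebraize [g.toRingHom]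
  have : FaithfulSMul (MvPolynomial (Fin s) k) A :=
    (faithfulSMul_iff_algebraMap_injective _ _).2 hg
  have : IsNoetherianRing A := Algebra.FiniteType.isNoetherianRing k A
  let p := m.comap (algebraMap (MvPolynomial (Fin s) k) A)
  have hp : p.IsMaximal := Ideal.isMaximal_comap_of_isIntegral_of_isMaximal m
  have : m.LiesOver p := ⟨rfl⟩
  refine le_antisymm (Ideal.height_le_ringKrullDim_of_ne_top hm.ne_top) ?_
  calc ringKrullDim A ≤ ringKrullDim (MvPolynomial (Fin s) k) := ringKrullDim_le_of_isIntegral _ _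
    _ = (p.height : WithBot ℕ∞) := by
      rw [MvPolynomial.ringKrullDim_of_isNoetherianRing, height_mvPolynomial_fin_of_isMaximal p hp]
      simp
    _ ≤ m.height := by
      rw [Ideal.height_eq_height_add_of_liesOver_of_hasGoingDown p m]
      exact_mod_cast le_self_add

lemma length_le_ringKrullDim_quotient_head {R : Type*} [CommRing R]
    (l : LTSeries (PrimeSpectrum R)) : l.length ≤ ringKrullDim (R ⧸ l.head.asIdeal) := by
  have hIci : PrimeSpectrum.zeroLocus (l.head.asIdeal : Set R) = Set.Ici l.head := rfl
  rw [ringKrullDim_quotient, hIci, ← Order.coheight_eq_krullDim_Ici]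
  exact_mod_cast Order.length_le_coheight_head

lemma exists_isPrime_height_le_ringKrullDim_quotient_add_encard {R : Type*} [CommRing R]
    [IsNoetherianRing R] (m : Ideal R) [m.IsPrime] {s : Set R} (hs : s ⊆ m) :
    ∃ q : Ideal R, q.IsPrime ∧ s ⊆ q ∧ q ≤ m ∧ m.height ≤ ringKrullDim (R ⧸ q) + s.encard := by
  let π := Ideal.Quotient.mk (Ideal.span s)
  have hker : RingHom.ker π ≤ m := by rw [Ideal.mk_ker]; exact Ideal.span_le.2 hs
  have hπ : Function.Surjective π := Ideal.Quotient.mk_surjective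
  have : (m.map π).IsPrime := Ideal.map_isPrime_of_surjective hπ hker
  obtain ⟨l, hlast, hlen⟩ := (m.map π).exists_ltSeries_length_eq_height
  let l' := l.map (PrimeSpectrum.comap π) (RingHom.strictMono_comap_of_surjective hπ)
  refine ⟨l'.head.asIdeal, l'.head.2, fun f hf => ?_, ?_, ?_⟩
  · have : π f = 0 := Ideal.Quotient.eq_zero_iff_mem.2 (Ideal.subset_span hf)
    simp [l', this]
  · calc l'.head.asIdeal ≤ l'.last.asIdeal := l'.head_le_last
      _ = (m.map π).comap π := by simp [l', hlast]
      _ = m := by rw [Ideal.comap_map_of_surjective' π hπ, sup_eq_left.2 hker]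
  · have h : (m.height : WithBot ℕ∞) ≤ (m.map π).height + s.encard :=
      WithBot.coe_le_coe.2 (Ideal.height_le_height_add_encard_of_subset s hs)
    refine h.trans (add_le_add_left ?_ _)
    rw [← hlen]
    exact length_le_ringKrullDim_quotient_head l'

end CommutativeAlgebra

section ZariskiDictionary

variable {σ : Type*} {N : ℕ}

lemma mem_vanishingIdeal_iff_eval {S : Set (σ → ℂ)} {f : MvPolynomial σ ℂ} :
    f ∈ vanishingIdeal ℂ S ↔ ∀ x ∈ S, eval x f = 0 := by
  simp [mem_vanishingIdeal_iff]

lemma notMem_vanishingIdeal_iff_eval {S : Set (σ → ℂ)} {f : MvPolynomial σ ℂ} :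
    f ∉ vanishingIdeal ℂ S ↔ ∃ x ∈ S, eval x f ≠ 0 := by
  simp

lemma mem_zeroLocus_iff_eval {I : Ideal (MvPolynomial σ ℂ)} {x : σ → ℂ} :
    x ∈ zeroLocus ℂ I ↔ ∀ f ∈ I, eval x f = 0 := by
  simp [mem_zeroLocus_iff]

lemma isPrime_vanishingIdeal_iff {S : Set (σ → ℂ)} :
    (vanishingIdeal ℂ S).IsPrime ↔ S.Nonempty ∧ ∀ f g : MvPolynomial σ ℂ,
      (∃ x ∈ S, eval x f ≠ 0) → (∃ x ∈ S, eval x g ≠ 0) →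
        ∃ x ∈ S, eval x f ≠ 0 ∧ eval x g ≠ 0 := by
  have hne : vanishingIdeal ℂ S ≠ ⊤ ↔ S.Nonempty := by
    simp [Ideal.ne_top_iff_one, Set.Nonempty]
  simp_rw [Ideal.isPrime_iff, hne, ← notMem_vanishingIdeal_iff_eval, ← mul_ne_zero_iff, ← map_mul,
    ← notMem_vanishingIdeal_iff_eval]
  refine and_congr_right fun _ => forall₂_congr fun f g => ?_
  tauto

lemma isAlg_zeroLocus (I : Ideal (MvPolynomial (Fin N) ℂ)) : IsAlg (zeroLocus ℂ I) :=
  ⟨I, Set.ext fun _ => mem_zeroLocus_iff_eval⟩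

lemma isAlg_setOf_eval_eq_zero (f : MvPolynomial (Fin N) ℂ) : IsAlg {x | eval x f = 0} :=
  ⟨{f}, by simp⟩

namespace IsAlg

lemma zeroLocus_vanishingIdeal {T : Set (Fin N → ℂ)} (hT : IsAlg T) :
    zeroLocus ℂ (vanishingIdeal ℂ T) = T := by
  obtain ⟨I, rfl⟩ := hT
  exact (zeroLocus_vanishingIdeal_le _).antisymm' fun x hx f hf =>
    mem_zeroLocus_iff_eval.1 hx f (mem_vanishingIdeal_iff_eval.2 fun y hy => hy f hf)

lemma exists_eval_ne_zero {T : Set (Fin N → ℂ)} (hT : IsAlg T) {x : Fin N → ℂ} (hx : x ∉ T) :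
    ∃ f : MvPolynomial (Fin N) ℂ, (∀ y ∈ T, eval y f = 0) ∧ eval x f ≠ 0 := by
  obtain ⟨I, rfl⟩ := hT
  obtain ⟨f, hf, hfx⟩ : ∃ f ∈ I, eval x f ≠ 0 := by simpa using hx
  exact ⟨f, fun y hy => hy f hf, hfx⟩

end IsAlg

lemma irrAlg_iff {T : Set (Fin N → ℂ)} :
    IrrAlg T ↔ IsAlg T ∧ (vanishingIdeal ℂ T).IsPrime := by
  rw [IrrAlg, isPrime_vanishingIdeal_iff]
  refine and_congr_right fun _ => and_congr_right fun _ => ⟨fun hirr f g hf hg => ?_, ?_⟩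
  · by_contra! hfg
    rcases hirr _ _ (isAlg_setOf_eval_eq_zero f) (isAlg_setOf_eval_eq_zero g)
      fun x hx => or_iff_not_imp_left.2 (hfg x hx) with h | h
    · exact hf.elim fun x hx => hx.2 (h hx.1)
    · exact hg.elim fun x hx => hx.2 (h hx.1)
  · intro hprod T₁ T₂ h₁ h₂ hT
    by_contra! hcon
    obtain ⟨x, hx, hx₁⟩ := Set.not_subset.1 hcon.1
    obtain ⟨y, hy, hy₂⟩ := Set.not_subset.1 hcon.2
    obtain ⟨f, hf, hfx⟩ := h₁.exists_eval_ne_zero hx₁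
    obtain ⟨g, hg, hgy⟩ := h₂.exists_eval_ne_zero hy₂
    obtain ⟨z, hz, hzf, hzg⟩ := hprod f g ⟨x, hx, hfx⟩ ⟨y, hy, hgy⟩
    exact (hT hz).elim (fun h => hzf (hf z h)) fun h => hzg (hg z h)

lemma IrrAlg.isPrime_vanishingIdeal {T : Set (Fin N → ℂ)} (hT : IrrAlg T) :
    (vanishingIdeal ℂ T).IsPrime := (irrAlg_iff.1 hT).2

lemma irrAlg_zeroLocus (P : Ideal (MvPolynomial (Fin N) ℂ)) [hP : P.IsPrime] :
    IrrAlg (zeroLocus ℂ P) :=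
  irrAlg_iff.2 ⟨isAlg_zeroLocus P, by rwa [IsPrime.vanishingIdeal_zeroLocus (K := ℂ) P]⟩

lemma zcl_eq_zeroLocus (S : Set (Fin N → ℂ)) : zcl S = zeroLocus ℂ (vanishingIdeal ℂ S) := by
  refine Set.Subset.antisymm
    (Set.sInter_subset_of_mem ⟨isAlg_zeroLocus _, zeroLocus_vanishingIdeal_le S⟩)
    (Set.subset_sInter fun T ⟨hT, hST⟩ => ?_)
  rw [← hT.zeroLocus_vanishingIdeal]
  exact zeroLocus_anti_mono (vanishingIdeal_anti_mono hST)

end ZariskiDictionary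

section Dimension

variable {N : ℕ}

/-- The dimension of a nonempty algebraic subset of affine space, as a natural number: the Krull
dimension of its coordinate ring. -/
def affDim (T : Set (Fin N → ℂ)) : ℕ :=
  ((ringKrullDim (MvPolynomial (Fin N) ℂ ⧸ vanishingIdeal ℂ T)).unbotD 0).toNat

lemma coe_affDim {T : Set (Fin N → ℂ)} (hT : T.Nonempty) :
    (affDim T : WithBot ℕ∞) = ringKrullDim (MvPolynomial (Fin N) ℂ ⧸ vanishingIdeal ℂ T) := by
  have htop : vanishingIdeal ℂ T ≠ ⊤ := fun h => by
    obtain ⟨x, hx⟩ := hT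
    have : (1 : MvPolynomial (Fin N) ℂ) ∈ vanishingIdeal ℂ T := h ▸ trivial
    simpa using mem_vanishingIdeal_iff_eval.1 this x hx
  have := Ideal.Quotient.nontrivial_iff.2 htop
  have hle := ringKrullDim_quotient_le (vanishingIdeal ℂ T)
  rw [MvPolynomial.ringKrullDim_of_isNoetherianRing, ringKrullDim_eq_zero_of_field,
    zero_add, Nat.card_fin] at hle
  have hbot := ringKrullDim_nonneg_of_nontrivial
    (R := MvPolynomial (Fin N) ℂ ⧸ vanishingIdeal ℂ T)
  rw [affDim]
  generalize ringKrullDim (MvPolynomial (Fin N) ℂ ⧸ vanishingIdeal ℂ T) = d at hle hbot ⊢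
  lift d to ℕ∞ using ne_bot_of_le_ne_bot WithBot.coe_ne_bot hbot
  lift d to ℕ using ne_top_of_le_ne_top (ENat.natCast_ne_top N) (by exact_mod_cast hle)
  rfl

lemma affDim_lt {T' T : Set (Fin N → ℂ)} (h' : IrrAlg T') (h : IrrAlg T) (hlt : T' ⊂ T) :
    affDim T' < affDim T := by
  have := h.isPrime_vanishingIdeal
  have hle := vanishingIdeal_anti_mono (k := ℂ) hlt.1
  obtain ⟨x, hxT, hx⟩ := Set.exists_of_ssubset hlt
  obtain ⟨f, hf, hfx⟩ := h'.1.exists_eval_ne_zero hx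
  have hf' : Ideal.Quotient.mk (vanishingIdeal ℂ T) f ∈ nonZeroDivisors _ :=
    mem_nonZeroDivisors_of_ne_zero <| Ideal.Quotient.eq_zero_iff_mem.not.2 <|
      notMem_vanishingIdeal_iff_eval.2 ⟨x, hxT, hfx⟩
  have hdim := ringKrullDim_succ_le_of_surjective _ (Ideal.Quotient.factor_surjective hle) hf'
    (by simpa [Ideal.Quotient.eq_zero_iff_mem, mem_vanishingIdeal_iff_eval] using hf)
  rw [← coe_affDim h'.2.1, ← coe_affDim h.2.1] at hdim
  exact_mod_cast hdim

lemma affDim_mono {T' T : Set (Fin N → ℂ)} (h' : IrrAlg T') (h : IrrAlg T) (hs : T' ⊆ T) :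
    affDim T' ≤ affDim T := by
  rcases hs.eq_or_ssubset with rfl | hss
  · exact le_rfl
  · exact (affDim_lt h' h hss).le

lemma exists_irrAlg_subset_zeroLocus {T : Set (Fin N → ℂ)} (hT : IrrAlg T) {x : Fin N → ℂ}
    (hx : x ∈ T) (s : Finset (MvPolynomial (Fin N) ℂ)) (hs : ∀ f ∈ s, eval x f = 0) :
    ∃ T', IrrAlg T' ∧ T' ⊆ T ∧ (∀ f ∈ s, ∀ y ∈ T', eval y f = 0) ∧ x ∈ T' ∧
      affDim T ≤ affDim T' + s.card := by
  have := hT.isPrime_vanishingIdeal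
  let π := Ideal.Quotient.mk (vanishingIdeal ℂ T)
  have hπ : Function.Surjective π := Ideal.Quotient.mk_surjective
  have hker : RingHom.ker π ≤ vanishingIdeal ℂ {x} := by
    rw [Ideal.mk_ker]
    exact vanishingIdeal_anti_mono (by simpa using hx)
  have : (vanishingIdeal ℂ {x}).IsMaximal := isMaximal_iff_eq_vanishingIdeal_singleton.2 ⟨x, rfl⟩
  let m := (vanishingIdeal ℂ {x}).map π
  have hm : m.IsMaximal := Ideal.IsMaximal.map_of_surjective_of_ker_le hπ hker
  have hcomap : m.comap π = vanishingIdeal ℂ {x} := by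
    rw [Ideal.comap_map_of_surjective' π hπ, sup_eq_left.2 hker]
  obtain ⟨q, hq, hsq, hqm, hdim⟩ :=
    exists_isPrime_height_le_ringKrullDim_quotient_add_encard m (s := π '' s) <| by
      rintro _ ⟨f, hf, rfl⟩
      exact Ideal.mem_map_of_mem _ (mem_vanishingIdeal_iff_eval.2 (by simpa using hs f hf))
  have hT' := irrAlg_zeroLocus (q.comap π)
  refine ⟨zeroLocus ℂ (q.comap π), hT', ?_, ?_, ?_, ?_⟩
  · exact (zeroLocus_anti_mono (Ideal.mk_ker.symm.le.trans (Ideal.comap_mono bot_le))).trans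
      hT.1.zeroLocus_vanishingIdeal.subset
  · exact fun f hf y hy => mem_zeroLocus_iff_eval.1 hy f (hsq ⟨f, hf, rfl⟩)
  · refine mem_zeroLocus_iff_eval.2 fun f hf => ?_
    have : f ∈ vanishingIdeal ℂ {x} := hcomap ▸ hqm hf
    exact mem_vanishingIdeal_iff_eval.1 this x rfl
  · have hquot := ringKrullDim_le_of_surjective _
      (Ideal.Quotient.lift_surjective_of_surjective (q.comap π) (f := (Ideal.Quotient.mk q).comp π)
        (fun f hf => Ideal.Quotient.eq_zero_iff_mem.2 hf) (Ideal.Quotient.mk_surjective.comp hπ))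
    rw [height_eq_ringKrullDim_of_isMaximal ℂ m, ← coe_affDim hT.2.1] at hdim
    rw [← IsPrime.vanishingIdeal_zeroLocus (K := ℂ) (q.comap π), ← coe_affDim hT'.2.1] at hquot
    have hcard : (((π '' (s : Set _)).encard : ℕ∞) : WithBot ℕ∞) ≤ (s.card : ℕ∞) :=
      WithBot.coe_le_coe.2 ((Set.encard_image_le _ _).trans (by simp))
    exact_mod_cast hdim.trans (add_le_add hquot hcard)

end Dimension

section PolynomialMaps

variable {σ τ ρ : Type*}

/-- Maps between affine spaces with polynomial coordinates. They pull polynomials back to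
polynomials, which is how irreducibility is transported to images. -/
def IsPolynomialMap (φ : (σ → ℂ) → τ → ℂ) : Prop :=
  ∃ p : τ → MvPolynomial σ ℂ, ∀ x i, φ x i = eval x (p i)

lemma IsPolynomialMap.exists_eval_eq {φ : (σ → ℂ) → τ → ℂ} (hφ : IsPolynomialMap φ)
    (f : MvPolynomial τ ℂ) : ∃ g : MvPolynomial σ ℂ, ∀ x, eval x g = eval (φ x) f := by
  obtain ⟨p, hp⟩ := hφ
  refine ⟨bind₁ p f, fun x => ?_⟩
  rw [funext (hp x), eval, eval₂Hom_bind₁]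
  rfl

lemma isPrime_vanishingIdeal_univ :
    (vanishingIdeal ℂ (Set.univ : Set (σ → ℂ))).IsPrime := by
  have : vanishingIdeal ℂ (Set.univ : Set (σ → ℂ)) = ⊥ := by
    refine (Submodule.eq_bot_iff _).2 fun f hf => funext fun x => ?_
    simpa using mem_vanishingIdeal_iff_eval.1 hf x trivial
  rw [this]
  exact Ideal.isPrime_bot

lemma isPrime_vanishingIdeal_image2 {φ : (σ → ℂ) → (τ → ℂ) → ρ → ℂ} {S : Set (σ → ℂ)}
    {T : Set (τ → ℂ)} (hφ₁ : ∀ y, IsPolynomialMap (φ · y)) (hφ₂ : ∀ x, IsPolynomialMap (φ x))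
    (hS : (vanishingIdeal ℂ S).IsPrime) (hT : (vanishingIdeal ℂ T).IsPrime) :
    (vanishingIdeal ℂ (Set.image2 φ S T)).IsPrime := by
  rw [isPrime_vanishingIdeal_iff] at hS hT ⊢
  refine ⟨hS.1.image2 hT.1, fun f g hf hg => ?_⟩
  obtain ⟨_, ⟨x₁, hx₁, y₁, hy₁, rfl⟩, hf⟩ := hf
  obtain ⟨_, ⟨x₂, hx₂, y₂, hy₂, rfl⟩, hg⟩ := hg
  obtain ⟨f₁, hf₁⟩ := (hφ₂ x₁).exists_eval_eq f
  obtain ⟨g₁, hg₁⟩ := (hφ₂ x₂).exists_eval_eq g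
  obtain ⟨y, hy, hfy, hgy⟩ :=
    hT.2 f₁ g₁ ⟨y₁, hy₁, (hf₁ y₁).trans_ne hf⟩ ⟨y₂, hy₂, (hg₁ y₂).trans_ne hg⟩
  rw [hf₁] at hfy
  rw [hg₁] at hgy
  obtain ⟨f₂, hf₂⟩ := (hφ₁ y).exists_eval_eq f
  obtain ⟨g₂, hg₂⟩ := (hφ₁ y).exists_eval_eq g
  obtain ⟨x, hx, hfx, hgx⟩ :=
    hS.2 f₂ g₂ ⟨x₁, hx₁, (hf₂ x₁).trans_ne hfy⟩ ⟨x₂, hx₂, (hg₂ x₂).trans_ne hgy⟩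
  exact ⟨φ x y, ⟨x, hx, y, hy, rfl⟩, (hf₂ x).symm.trans_ne hfx, (hg₂ x).symm.trans_ne hgx⟩

lemma isPolynomialMap_smul (c : ℂ) : IsPolynomialMap fun x : σ → ℂ => c • x :=
  ⟨fun i => C c * X i, by simp⟩

end PolynomialMaps

section LinearForms

variable {N : ℕ}

/-- A linear form on affine space, as a homogeneous polynomial of degree one. -/
def linearPoly (φ : Module.Dual ℂ (Fin N → ℂ)) : MvPolynomial (Fin N) ℂ :=
  ∑ a, C (φ (Pi.single a 1)) * X a

lemma eval_linearPoly (φ : Module.Dual ℂ (Fin N → ℂ)) (x : Fin N → ℂ) :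
    eval x (linearPoly φ) = φ x := by
  conv_rhs => rw [← (Pi.basisFun ℂ (Fin N)).sum_repr x]
  simp [linearPoly, mul_comm]

lemma pderiv_linearPoly (φ : Module.Dual ℂ (Fin N → ℂ)) (a : Fin N) :
    pderiv a (linearPoly φ) = C (φ (Pi.single a 1)) := by
  simp [linearPoly, Pi.single_apply]

lemma exists_dual_family_mem_iff (W : Submodule ℂ (Fin N → ℂ)) :
    ∃ (e : ℕ) (φ : Fin e → Module.Dual ℂ (Fin N → ℂ)), Module.finrank ℂ W + e = N ∧
      ∀ x, x ∈ W ↔ ∀ i, φ i x = 0 := by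
  let b := Module.finBasis ℂ W.dualAnnihilator
  refine ⟨_, fun i => b i, ?_, fun x => ⟨fun hx i => ?_, fun hx => ?_⟩⟩
  · rw [Subspace.finrank_add_finrank_dualAnnihilator_eq, Module.finrank_fin_fun]
  · exact (Submodule.mem_dualAnnihilator _).1 (b i).2 x hx
  · have hzero : (Module.Dual.eval ℂ _ x).comp W.dualAnnihilator.subtype = 0 := b.ext hx
    exact (Subspace.forall_mem_dualAnnihilator_apply_eq_zero_iff W x).1 fun ψ hψ =>
      LinearMap.congr_fun hzero ⟨ψ, hψ⟩

lemma isAlg_submodule (W : Submodule ℂ (Fin N → ℂ)) : IsAlg (W : Set (Fin N → ℂ)) := by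
  obtain ⟨e, φ, -, hφ⟩ := exists_dual_family_mem_iff W
  exact ⟨Set.range fun i => linearPoly (φ i), by ext; simp [eval_linearPoly, hφ]⟩

end LinearForms

section Cones

variable {N : ℕ} {S T : Set (Fin N → ℂ)}

lemma IsAlg.inter (hS : IsAlg S) (hT : IsAlg T) : IsAlg (S ∩ T) := by
  obtain ⟨I, rfl⟩ := hS
  obtain ⟨J, rfl⟩ := hT
  exact ⟨I ∪ J, by ext; simp [or_imp, forall_and]⟩

lemma IsAlg.subset_iff (hT : IsAlg T) :
    S ⊆ T ↔ vanishingIdeal ℂ T ≤ vanishingIdeal ℂ S := by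
  refine ⟨vanishingIdeal_anti_mono, fun h => ?_⟩
  rw [← hT.zeroLocus_vanishingIdeal]
  exact le_zeroLocus_iff_le_vanishingIdeal.2 h

lemma IsCone.submodule (W : Submodule ℂ (Fin N → ℂ)) : IsCone (W : Set (Fin N → ℂ)) :=
  ⟨W.zero_mem, fun c _ hx => W.smul_mem c hx⟩

lemma IsCone.inter (hS : IsCone S) (hT : IsCone T) : IsCone (S ∩ T) :=
  ⟨⟨hS.1, hT.1⟩, fun c x hx => ⟨hS.2 c x hx.1, hT.2 c x hx.2⟩⟩

lemma isCone_zcl (hS : IsCone S) : IsCone (zcl S) := by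
  rw [zcl_eq_zeroLocus]
  refine ⟨zeroLocus_vanishingIdeal_le S hS.1, fun c x hx => mem_zeroLocus_iff_eval.2 fun f hf => ?_⟩
  obtain ⟨g, hg⟩ := (isPolynomialMap_smul c).exists_eval_eq f
  rw [← hg]
  refine mem_zeroLocus_iff_eval.1 hx g (mem_vanishingIdeal_iff_eval.2 fun y hy => ?_)
  rw [hg]
  exact mem_vanishingIdeal_iff_eval.1 hf _ (hS.2 c y hy)

lemma IrrAlg.exists_isCone_superset (hT : IrrAlg T) :
    ∃ T', IrrAlg T' ∧ IsCone T' ∧ T ⊆ T' ∧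
      ∀ Z : Set (Fin N → ℂ), IsAlg Z → IsCone Z → T ⊆ Z → T' ⊆ Z := by
  let S : Set (Fin N → ℂ) := Set.image2 (fun (c : Unit → ℂ) y => c () • y) Set.univ T
  have hprime : (vanishingIdeal ℂ S).IsPrime :=
    isPrime_vanishingIdeal_image2 (fun y => ⟨fun i => X () * C (y i), by simp⟩)
      (fun c => isPolynomialMap_smul (c ())) isPrime_vanishingIdeal_univ hT.isPrime_vanishingIdeal
  have hmem (c : ℂ) {y : Fin N → ℂ} (hy : y ∈ T) : c • y ∈ S := ⟨fun _ => c, trivial, y, hy, rfl⟩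
  have hS : IsCone S := by
    refine ⟨?_, ?_⟩
    · obtain ⟨x, hx⟩ := hT.2.1
      simpa using hmem 0 hx
    · rintro c _ ⟨d, -, y, hy, rfl⟩
      simpa [smul_smul] using hmem (c * d ()) hy
  refine ⟨zcl S, ?_, isCone_zcl hS, fun x hx => ?_, fun Z hZ hZc hTZ => ?_⟩
  · rw [zcl_eq_zeroLocus]
    exact irrAlg_zeroLocus _
  · rw [zcl_eq_zeroLocus]
    exact zeroLocus_vanishingIdeal_le S (by simpa using hmem 1 hx)
  · refine Set.sInter_subset_of_mem ⟨hZ, ?_⟩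
    rintro _ ⟨c, -, y, hy, rfl⟩
    exact hZc.2 _ y (hTZ hy)

lemma exists_irrAlg_isCone_subset_inter (hT : IrrAlg T) (hc : IsCone T)
    (W : Submodule ℂ (Fin N → ℂ)) {x : Fin N → ℂ} (hx : x ∈ T) (hxW : x ∈ W) :
    ∃ T', IrrAlg T' ∧ IsCone T' ∧ T' ⊆ T ∩ W ∧ x ∈ T' ∧
      affDim T + Module.finrank ℂ W ≤ affDim T' + N := by
  obtain ⟨e, φ, hcard, hφ⟩ := exists_dual_family_mem_iff W
  obtain ⟨T₁, hT₁, hT₁T, hzero, hxT₁, hdim⟩ := exists_irrAlg_subset_zeroLocus hT hx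
    (Finset.univ.image fun i => linearPoly (φ i))
    (by simpa [eval_linearPoly] using (hφ x).1 hxW)
  obtain ⟨T₂, hT₂, hT₂c, hT₁₂, hmin⟩ := hT₁.exists_isCone_superset
  refine ⟨T₂, hT₂, hT₂c, hmin _ (hT.1.inter (isAlg_submodule W)) (hc.inter (.submodule W))
    fun y hy => ⟨hT₁T hy, (hφ y).2 fun i => ?_⟩, hT₁₂ hxT₁, ?_⟩
  · simpa [eval_linearPoly] using hzero _ (Finset.mem_image_of_mem _ (Finset.mem_univ i)) y hy
  · have hmono := affDim_mono hT₁ hT₂ hT₁₂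
    have hle : (Finset.univ.image fun i => linearPoly (φ i)).card ≤ e :=
      Finset.card_image_le.trans (by simp)
    omega

end Cones

section ProjectiveDimension

variable {N : ℕ} {S T : Set (Fin N → ℂ)}

lemma irrAlg_singleton (x : Fin N → ℂ) : IrrAlg {x} := by
  have hmax : (vanishingIdeal ℂ {x}).IsMaximal :=
    isMaximal_iff_eq_vanishingIdeal_singleton.2 ⟨x, rfl⟩
  refine irrAlg_iff.2 ⟨⟨Set.range fun i => X i - C (x i), ?_⟩, hmax.isPrime⟩
  ext y
  simp [sub_eq_zero, funext_iff]

lemma affDim_singleton (x : Fin N → ℂ) : affDim {x} = 0 := by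
  have hmax : (vanishingIdeal ℂ {x}).IsMaximal :=
    isMaximal_iff_eq_vanishingIdeal_singleton.2 ⟨x, rfl⟩
  have h := coe_affDim (Set.singleton_nonempty x)
  rw [ringKrullDim_eq_zero_of_isField
    ((Ideal.Quotient.maximal_ideal_iff_isField_quotient _).1 hmax)] at h
  exact_mod_cast h

lemma IsCone.exists_mem_ne_zero (hc : IsCone T) (h0 : T ≠ {0}) : ∃ x ∈ T, x ≠ 0 := by
  by_contra! h
  exact h0 (Set.Subset.antisymm h (by simpa using hc.1))

lemma affDim_pos (hT : IrrAlg T) (hc : IsCone T) (h0 : T ≠ {0}) : 0 < affDim T := by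
  obtain ⟨x, hx, hx0⟩ := hc.exists_mem_ne_zero h0
  have hlt : {0} ⊂ T := ⟨by simpa using hc.1, fun h => hx0 (h hx)⟩
  exact (Nat.zero_le _).trans_lt (affDim_lt (irrAlg_singleton 0) hT hlt)

lemma pdim_le {d : ℕ}
    (h : ∀ T, IrrAlg T → IsCone T → T ≠ {0} → T ⊆ S → affDim T ≤ d + 1) : pdim S ≤ nn d := by
  refine iSup_le fun l => ?_
  let dim : {T : Set (Fin N → ℂ) // IrrAlg T ∧ IsCone T ∧ T ≠ {0} ∧ T ⊆ S} → ℕ :=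
    fun T => affDim T.1 - 1
  have hdim : StrictMono dim := fun T T' hlt => by
    have hlt' := affDim_lt T.2.1 T'.2.1 hlt
    have hpos := affDim_pos T.2.1 T.2.2.1 T.2.2.2.1
    simp only [dim]
    omega
  have hlen : dim l.head + l.length ≤ dim l.last := (l.map dim hdim).head_add_length_le_nat
  have hle : l.length ≤ d := by
    obtain ⟨hT, hc, h0, hTS⟩ := l.last.2
    have hlast := h _ hT hc h0 hTS
    simp only [dim] at hlen
    omega
  rw [nn]
  exact_mod_cast hle

lemma le_height_of_lt_affDim {d : ℕ} (hT : IrrAlg T ∧ IsCone T ∧ T ≠ {0} ∧ T ⊆ S)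
    (hd : d < affDim T) :
    d ≤ Order.height (⟨T, hT⟩ : {T // IrrAlg T ∧ IsCone T ∧ T ≠ {0} ∧ T ⊆ S}) := by
  induction d generalizing T with
  | zero => simp
  | succ d ih =>
    obtain ⟨hirr, hc, h0, hTS⟩ := hT
    obtain ⟨x, hx, hx0⟩ := hc.exists_mem_ne_zero h0
    obtain ⟨φ, hφ⟩ := Module.Projective.exists_dual_ne_zero ℂ hx0
    have hker : Module.finrank ℂ φ.ker + 1 = N := by
      rw [Module.Dual.finrank_ker_add_one_of_ne_zero (by rintro rfl; exact hφ rfl),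
        Module.finrank_fin_fun]
    obtain ⟨T', hT', hTc', hsub, -, hdim⟩ :=
      exists_irrAlg_isCone_subset_inter hirr hc φ.ker hc.1 (zero_mem _)
    have h0' : T' ≠ {0} := by
      rintro rfl
      rw [affDim_singleton] at hdim
      omega
    have hlt : T' ⊂ T := ⟨fun y hy => (hsub hy).1, fun h => hφ (hsub (h hx)).2⟩
    have hT'S : IrrAlg T' ∧ IsCone T' ∧ T' ≠ {0} ∧ T' ⊆ S := ⟨hT', hTc', h0', hlt.1.trans hTS⟩
    have hheight := Order.height_add_one_le (a := (⟨T', hT'S⟩ :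
      {T // IrrAlg T ∧ IsCone T ∧ T ≠ {0} ∧ T ⊆ S})) (b := ⟨T, hirr, hc, h0, hTS⟩) hlt
    calc ((d + 1 : ℕ) : ℕ∞) = d + 1 := by push_cast; rfl
      _ ≤ _ := (add_le_add_left (ih hT'S (by omega)) 1).trans hheight

lemma nn_le_pdim {d : ℕ} (hT : IrrAlg T) (hc : IsCone T) (hTS : T ⊆ S) (hd : d < affDim T) :
    nn d ≤ pdim S := by
  have h0 : T ≠ {0} := by
    rintro rfl
    simp [affDim_singleton] at hd
  refine le_trans ?_ (Order.height_le_krullDim ⟨T, hT, hc, h0, hTS⟩)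
  exact WithBot.coe_le_coe.2 (le_height_of_lt_affDim ⟨hT, hc, h0, hTS⟩ hd)

end ProjectiveDimension

section Components

variable {N : ℕ} {S T : Set (Fin N → ℂ)}

lemma IsAlg.exists_isComponent_superset (hS : IsAlg S) (hT : IrrAlg T) (hTS : T ⊆ S) :
    ∃ p ∈ (vanishingIdeal ℂ S).minimalPrimes,
      IsComponent S (zeroLocus ℂ p) ∧ T ⊆ zeroLocus ℂ p := by
  have := hT.isPrime_vanishingIdeal
  obtain ⟨p, hp, hpT⟩ := Ideal.exists_minimalPrimes_le (vanishingIdeal_anti_mono (k := ℂ) hTS)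
  have hprime : p.IsPrime := hp.1.1
  refine ⟨p, hp, ⟨irrAlg_zeroLocus p, ?_, fun T' hT' hT'S hpT' => ?_⟩, ?_⟩
  · exact (zeroLocus_anti_mono hp.1.2).trans hS.zeroLocus_vanishingIdeal.subset
  · have hle : vanishingIdeal ℂ T' ≤ p := by
      rw [← IsPrime.vanishingIdeal_zeroLocus (K := ℂ) p]
      exact vanishingIdeal_anti_mono hpT'
    have hge := hp.2 ⟨hT'.isPrime_vanishingIdeal, vanishingIdeal_anti_mono hT'S⟩ hle
    rw [le_antisymm hge hle, hT'.1.zeroLocus_vanishingIdeal]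
  · rwa [(isAlg_zeroLocus p).subset_iff, IsPrime.vanishingIdeal_zeroLocus]

lemma IsAlg.finite_setOf_isComponent (hS : IsAlg S) : {T | IsComponent S T}.Finite := by
  refine ((Ideal.finite_minimalPrimes_of_isNoetherianRing _ (vanishingIdeal ℂ S)).image
    (zeroLocus ℂ)).subset fun T hT => ?_
  obtain ⟨p, hp, hcomp, hle⟩ := hS.exists_isComponent_superset hT.1 hT.2.1
  exact ⟨p, hp, (hT.2.2 _ hcomp.1 hcomp.2.1 hle).symm⟩

lemma IrrAlg.exists_subset_of_subset_sUnion (hT : IrrAlg T) {𝒮 : Set (Set (Fin N → ℂ))}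
    (hfin : 𝒮.Finite) (h𝒮 : ∀ S ∈ 𝒮, IsAlg S) (hsub : T ⊆ ⋃₀ 𝒮) : ∃ S ∈ 𝒮, T ⊆ S := by
  have hle : hfin.toFinset.inf (vanishingIdeal ℂ) ≤ vanishingIdeal ℂ T := fun f hf =>
    mem_vanishingIdeal_iff_eval.2 fun x hx => by
      obtain ⟨S, hS, hxS⟩ := hsub hx
      have : hfin.toFinset.inf (vanishingIdeal ℂ) ≤ vanishingIdeal ℂ S :=
        Finset.inf_le (hfin.mem_toFinset.2 hS)
      exact mem_vanishingIdeal_iff_eval.1 (this hf) x hxS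
  obtain ⟨S, hS, hST⟩ := (Ideal.IsPrime.inf_le' hT.isPrime_vanishingIdeal).1 hle
  rw [hfin.mem_toFinset] at hS
  exact ⟨S, hS, (h𝒮 S hS).subset_iff.2 hST⟩

lemma IrrAlg.exists_isComponent_of_subset_compThrough {x : Fin N → ℂ} (hS : IsAlg S)
    (hT : IrrAlg T) (hsub : T ⊆ compThrough S x) : ∃ T', IsComponent S T' ∧ x ∈ T' ∧ T ⊆ T' := by
  obtain ⟨T', ⟨hT', hx⟩, hTT'⟩ := hT.exists_subset_of_subset_sUnion
    (hS.finite_setOf_isComponent.subset fun _ h => h.1) (fun _ h => h.1.1.1) hsub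
  exact ⟨T', hT', hx, hTT'⟩

lemma IrrAlg.subset_compThrough {x : Fin N → ℂ} (hS : IsAlg S) (hT : IrrAlg T) (hTS : T ⊆ S)
    (hx : x ∈ T) : T ⊆ compThrough S x := by
  obtain ⟨p, -, hcomp, hle⟩ := hS.exists_isComponent_superset hT hTS
  exact hle.trans (Set.subset_sUnion_of_mem ⟨hcomp, hle hx⟩)

end Components

section Taylor

variable {σ A : Type*} [Fintype σ] [CommRing A] [Algebra ℂ A]

lemma sum_mul_aeval_pderiv_mul (x v : σ → A) (f g : MvPolynomial σ ℂ) :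
    ∑ a, v a * aeval x (pderiv a (f * g)) =
      aeval x f * ∑ a, v a * aeval x (pderiv a g) +
        aeval x g * ∑ a, v a * aeval x (pderiv a f) := by
  simp_rw [Derivation.leibniz, Finset.mul_sum, ← Finset.sum_add_distrib]
  refine Finset.sum_congr rfl fun a _ => ?_
  simp only [smul_eq_mul, map_add, map_mul]
  ring

lemma sum_mul_aeval_pderiv_X (x v : σ → A) (b : σ) :
    ∑ a, v a * aeval x (pderiv a (X b : MvPolynomial σ ℂ)) = v b := by
  simp [Pi.single_apply, pderiv_X, apply_ite (aeval x)]

lemma aeval_add_sub_sub_mem_sq (J : Ideal A) (x : σ → A) {y : σ → A} (hy : ∀ a, y a ∈ J)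
    (f : MvPolynomial σ ℂ) :
    aeval (x + y) f - aeval x f - ∑ a, y a * aeval x (pderiv a f) ∈ J ^ 2 := by
  induction f using MvPolynomial.induction_on with
  | C c => simp
  | add p q hp hq =>
    convert add_mem hp hq using 1
    simp only [map_add, mul_add, Finset.sum_add_distrib]
    ring
  | mul_X p b hp =>
    have hcross : (∑ a, y a * aeval x (pderiv a p)) * y b ∈ J ^ 2 := by
      rw [sq]
      exact Ideal.mul_mem_mul (sum_mem fun a _ => J.mul_mem_right _ (hy a)) (hy b)
    convert add_mem (Ideal.mul_mem_right (x b + y b) _ hp) hcross using 1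
    rw [sum_mul_aeval_pderiv_mul, sum_mul_aeval_pderiv_X]
    simp only [map_mul, aeval_X, Pi.add_apply]
    ring

end Taylor

section TangentSpaces

variable {N : ℕ} {S T : Set (Fin N → ℂ)} {x : Fin N → ℂ}

/-- The differential of a polynomial at a point, as a linear form. -/
def differential (x : Fin N → ℂ) :
    MvPolynomial (Fin N) ℂ →ₗ[ℂ] Module.Dual ℂ (Fin N → ℂ) :=
  ∑ i, ((aeval x).toLinearMap ∘ₗ (pderiv i).toLinearMap).smulRight (LinearMap.proj i)

lemma differential_apply (x v : Fin N → ℂ) (f : MvPolynomial (Fin N) ℂ) :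
    differential x f v = ∑ i, v i * eval x (pderiv i f) := by
  simp [differential, mul_comm]

lemma differential_mul (x : Fin N → ℂ) (f g : MvPolynomial (Fin N) ℂ) :
    differential x (f * g) = eval x f • differential x g + eval x g • differential x f := by
  refine LinearMap.ext fun v => ?_
  simpa [differential_apply] using sum_mul_aeval_pderiv_mul x v f g

lemma differential_linearPoly (φ : Module.Dual ℂ (Fin N → ℂ)) (x : Fin N → ℂ) :
    differential x (linearPoly φ) = φ := by
  refine LinearMap.ext fun v => ?_
  rw [differential_apply, ← eval_linearPoly φ v]
  simp only [pderiv_linearPoly, eval_C]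
  simp [linearPoly, mul_comm]

lemma differential_C (x : Fin N → ℂ) (c : ℂ) : differential x (C c) = 0 :=
  LinearMap.ext fun v => by simp [differential_apply]

lemma tanSpan_eq_dualCoannihilator (S : Set (Fin N → ℂ)) (x : Fin N → ℂ) :
    tanSpan S x = (((vanishingIdeal ℂ S).restrictScalars ℂ).map
      (differential x)).dualCoannihilator := by
  rw [tanSpan, ← Submodule.span_eq (Submodule.dualCoannihilator _)]
  congr 1
  ext v
  simp [embTangent, Submodule.mem_dualCoannihilator, differential_apply]

lemma mem_tanSpan_iff {v : Fin N → ℂ} :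
    v ∈ tanSpan S x ↔ ∀ f ∈ vanishingIdeal ℂ S, differential x f v = 0 := by
  simp [tanSpan_eq_dualCoannihilator, Submodule.mem_dualCoannihilator]

lemma tanSpan_mono (hST : S ⊆ T) : tanSpan S x ≤ tanSpan T x :=
  fun _ hv => mem_tanSpan_iff.2 fun f hf => mem_tanSpan_iff.1 hv f (vanishingIdeal_anti_mono hST hf)

lemma finrank_map_differential_add_finrank_tanSpan (S : Set (Fin N → ℂ)) (x : Fin N → ℂ) :
    Module.finrank ℂ (((vanishingIdeal ℂ S).restrictScalars ℂ).map (differential x)) +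
      Module.finrank ℂ (tanSpan S x) = N := by
  rw [tanSpan_eq_dualCoannihilator, Subspace.finrank_add_finrank_dualCoannihilator_eq,
    Module.finrank_fin_fun]

lemma mem_sq_vanishingIdeal_singleton {f : MvPolynomial (Fin N) ℂ} (hf : eval x f = 0)
    (hdf : differential x f = 0) : f ∈ vanishingIdeal ℂ {x} ^ 2 := by
  have htaylor := aeval_add_sub_sub_mem_sq (vanishingIdeal ℂ {x}) (fun a => C (x a))
    (y := fun a => X a - C (x a)) (fun a => mem_vanishingIdeal_iff_eval.2 (by simp)) f
  have hC (g : MvPolynomial (Fin N) ℂ) : aeval (fun a => C (x a)) g =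
      (C (eval x g) : MvPolynomial (Fin N) ℂ) := aeval_algebraMap_apply _ x g
  have hX : ((fun a => C (x a)) + fun a => X a - C (x a) : Fin N → MvPolynomial (Fin N) ℂ) = X := by
    ext1 a
    simp
  have hd (a : Fin N) : eval x (pderiv a f) = 0 := by
    simpa [differential_apply, Pi.single_apply] using LinearMap.congr_fun hdf (Pi.single a 1)
  simpa only [hX, hC, hf, hd, aeval_X_left_apply, map_zero, mul_zero, Finset.sum_const_zero,
    sub_zero] using htaylor

lemma vanishingIdeal_singleton_le_sup_sq (hx : x ∈ S) (htan : tanSpan S x = ⊥) :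
    vanishingIdeal ℂ {x} ≤ vanishingIdeal ℂ S ⊔ vanishingIdeal ℂ {x} ^ 2 := fun g hg => by
  have hdual : ((vanishingIdeal ℂ S).restrictScalars ℂ).map (differential x) = ⊤ := by
    refine Submodule.eq_top_of_finrank_eq ?_
    have := finrank_map_differential_add_finrank_tanSpan S x
    rw [Subspace.dual_finrank_eq, Module.finrank_fin_fun]
    rwa [htan, finrank_bot, add_zero] at this
  obtain ⟨f, hf, hfg⟩ : differential x g ∈ Submodule.map (differential x) _ :=
    hdual ▸ Submodule.mem_top
  rw [← add_sub_cancel f g]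
  refine Submodule.add_mem_sup hf (mem_sq_vanishingIdeal_singleton ?_ ?_)
  · rw [map_sub, mem_vanishingIdeal_iff_eval.1 hg x rfl, mem_vanishingIdeal_iff_eval.1 hf x hx,
      sub_zero]
  · rw [map_sub, hfg, sub_self]

lemma eq_singleton_of_tanSpan_eq_bot (hT : IrrAlg T) (hx : x ∈ T) (htan : tanSpan T x = ⊥) :
    T = {x} := by
  have := hT.isPrime_vanishingIdeal
  have hmax : (vanishingIdeal ℂ {x}).IsMaximal :=
    isMaximal_iff_eq_vanishingIdeal_singleton.2 ⟨x, rfl⟩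
  let π := Ideal.Quotient.mk (vanishingIdeal ℂ T)
  have hker : RingHom.ker π = vanishingIdeal ℂ T := Ideal.mk_ker
  have hxT : {x} ⊆ T := Set.singleton_subset_iff.2 hx
  have hidem : IsIdempotentElem ((vanishingIdeal ℂ {x}).map π) := by
    refine le_antisymm Ideal.mul_le_right ?_
    rw [← Ideal.map_mul, ← sq]
    refine (Ideal.map_mono (vanishingIdeal_singleton_le_sup_sq hx htan)).trans ?_
    rw [Ideal.map_sup, Ideal.map_quotient_self, bot_sup_eq]
  have hmap : ((vanishingIdeal ℂ {x}).map π).IsMaximal :=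
    Ideal.IsMaximal.map_of_surjective_of_ker_le Ideal.Quotient.mk_surjective
      (hker.trans_le (vanishingIdeal_anti_mono hxT))
  have hbot := ((Ideal.isIdempotentElem_iff_eq_bot_or_top _ (IsNoetherian.noetherian _)).1
    hidem).resolve_right hmap.ne_top
  rw [Ideal.map_eq_bot_iff_le_ker, hker] at hbot
  exact ((irrAlg_singleton x).1.subset_iff.2 hbot).antisymm hxT

lemma affDim_le_finrank_tanSpan (hT : IrrAlg T) (hx : x ∈ T) :
    affDim T ≤ Module.finrank ℂ (tanSpan T x) := by
  induction hd : Module.finrank ℂ (tanSpan T x) using Nat.strong_induction_on generalizing T with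
  | h d ih =>
    subst hd
    by_cases htan : tanSpan T x = ⊥
    · rw [eq_singleton_of_tanSpan_eq_bot hT hx htan, affDim_singleton]
      exact Nat.zero_le _
    obtain ⟨v, hv, hv0⟩ := Submodule.exists_mem_ne_zero_of_ne_bot htan
    obtain ⟨φ, hφ⟩ := Module.Projective.exists_dual_ne_zero ℂ hv0
    obtain ⟨T', hT', hT'T, hzero, hxT', hdim⟩ :=
      exists_irrAlg_subset_zeroLocus hT hx {linearPoly φ - C (φ x)}
        (by simpa using sub_eq_zero.2 (eval_linearPoly φ x))
    have hlt : tanSpan T' x < tanSpan T x := by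
      refine lt_of_le_of_ne (tanSpan_mono hT'T) fun heq => hφ ?_
      have := mem_tanSpan_iff.1 (heq ▸ hv) _
        (mem_vanishingIdeal_iff_eval.2 (hzero _ (Finset.mem_singleton_self _)))
      rwa [map_sub, differential_linearPoly, differential_C, sub_zero] at this
    have hrank := Submodule.finrank_lt_finrank_of_lt hlt
    have := ih _ hrank hT' hxT' rfl
    rw [Finset.card_singleton] at hdim
    omega

end TangentSpaces

section Derivations

open scoped KaehlerDifferential

variable {k : Type*} [Field k]

lemma exists_derivation_extending {A K : Type*} [CommRing A] [Field K] [Algebra k A] [Algebra k K]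
    [Algebra A K] [IsScalarTower k A K] [Algebra.FormallyEtale A K] (D : Derivation k A K) :
    ∃ D' : Derivation k K K, ∀ a, D' (algebraMap A K a) = D a := by
  let lift : TensorProduct A K Ω[A⁄k] →ₗ[K] K := D.liftKaehlerDifferential.liftBaseChange K
  let e := (KaehlerDifferential.tensorKaehlerEquivOfFormallyEtale k A K).symm
  refine ⟨(lift ∘ₗ e.toLinearMap).compDer (KaehlerDifferential.D k K), fun a => ?_⟩
  change lift (e (KaehlerDifferential.D k K (algebraMap A K a))) = D a
  rw [KaehlerDifferential.tensorKaehlerEquivOfFormallyEtale_symm_D_algebraMap]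
  simp [lift]

variable {K : Type*} [Field K] [CharZero K] [Algebra k K]

lemma formallyEtale_of_isAlgebraic (A : Type*) [CommRing A] [IsDomain A] [Algebra A K]
    [FaithfulSMul A K] [Algebra.IsAlgebraic A K] : Algebra.FormallyEtale A K := by
  let : Algebra (FractionRing A) K := FractionRing.liftAlgebra A K
  have : CharZero (FractionRing A) := (algebraMap (FractionRing A) K).charZero
  have : Algebra.IsAlgebraic (FractionRing A) K :=
    (IsFractionRing.comap_isAlgebraic_iff (A := A)).1 inferInstance
  have : Algebra.FormallyEtale A (FractionRing A) :=
    Algebra.FormallyEtale.of_isLocalization (nonZeroDivisors A)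
  have : Algebra.FormallyEtale (FractionRing A) K := Algebra.FormallyEtale.of_isSeparable _ _
  exact Algebra.FormallyEtale.comp A (FractionRing A) K

lemma exists_derivation_ne_zero_of_transcendental {x : K} (hx : Transcendental k x) :
    ∃ D : Derivation k K K, D x ≠ 0 := by
  have hindep : AlgebraicIndepOn k id {x} :=
    algebraicIndependent_unique_type_iff.2 hx
  obtain ⟨s, hxs, hs⟩ := exists_isTranscendenceBasis_superset hindep
  let f : MvPolynomial s k →ₐ[k] K := aeval (↑)
  let : Algebra (MvPolynomial s k) K := f.toRingHom.toAlgebra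
  have : IsScalarTower k (MvPolynomial s k) K := .of_algebraMap_eq' f.comp_algebraMap.symm
  have : FaithfulSMul (MvPolynomial s k) K := (faithfulSMul_iff_algebraMap_injective _ _).2 hs.1
  have : Algebra.IsAlgebraic (MvPolynomial s k) K := by
    have := hs.isAlgebraic
    refine Algebra.IsAlgebraic.of_ringHom_of_comp_eq hs.1.aevalEquiv (RingHom.id K)
      hs.1.aevalEquiv.surjective Function.injective_id ?_
    exact RingHom.ext fun p => hs.1.algebraMap_aevalEquiv p
  have := formallyEtale_of_isAlgebraic (K := K) (MvPolynomial s k)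
  obtain ⟨D, hD⟩ := exists_derivation_extending (mkDerivation k fun _ : s => (1 : K))
  refine ⟨D, ?_⟩
  have hDx := hD (X ⟨x, hxs rfl⟩)
  rw [mkDerivation_X, show algebraMap (MvPolynomial s k) K (X _) = x from aeval_X _ _] at hDx
  exact hDx ▸ one_ne_zero

lemma exists_algebraMap_eq_of_forall_derivation_eq_zero [IsAlgClosed k] {x : K}
    (h : ∀ D : Derivation k K K, D x = 0) : ∃ c : k, algebraMap k K c = x := by
  have halg : IsAlgebraic k x := not_not.1 fun hx =>
    let ⟨D, hD⟩ := exists_derivation_ne_zero_of_transcendental hx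
    hD (h D)
  exact minpoly.mem_range_of_degree_eq_one k x
    (IsAlgClosed.degree_eq_one_of_irreducible k (minpoly.irreducible halg.isIntegral))

/-- The field of constants of a derivation. -/
def constants (D : Derivation k K K) : Subfield K where
  carrier := {z | D z = 0}
  mul_mem' {a b} ha hb := by simp_all
  one_mem' := by simp
  add_mem' {a b} ha hb := by simp_all
  zero_mem' := by simp
  neg_mem' {a} ha := by simp_all
  inv_mem' a ha := by simp_all [D.leibniz_inv]

lemma mem_constants_of_isIntegral (D : Derivation k K K) {x : K} (hx : IsIntegral (constants D) x) :
    x ∈ constants D := by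
  let D' : Derivation (constants D) K K := Derivation.mk'
    { toFun := D
      map_add' := map_add D
      map_smul' := fun c z => by simp [Subfield.smul_def, show D c = 0 from c.2] } D.leibniz
  have hderiv := (minpoly.irreducible hx).separable.aeval_derivative_ne_zero (minpoly.aeval _ x)
  refine (mul_eq_zero.1 ?_).resolve_left hderiv
  rw [← smul_eq_mul, show D x = D' x from rfl, ← Derivation.map_aeval, minpoly.aeval, map_zero]

lemma exists_valuationSubring_of_derivation_ne_zero (D : Derivation k K K) {x : K} (hx : D x ≠ 0) :
    ∃ O : ValuationSubring K, (∀ z, D z = 0 → z ∈ O) ∧ x ∉ O := by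
  by_contra! h
  refine hx (mem_constants_of_isIntegral D ?_)
  have hmem : x ∈ ⨅ V : {V : ValuationSubring K // ↑(constants D) ⊆ (V.toSubring : Set K)},
      V.1.toSubring :=
    Subring.mem_iInf.2 fun V => h V fun z hz => V.2 hz
  rw [iInf_valuationSubring_superset, show Subring.closure (constants D : Set K) =
    (constants D).toSubring from Subring.closure_eq _] at hmem
  exact hmem

end Derivations

section HomogeneousComponents

variable {σ A : Type*} [CommRing A] [Algebra ℂ A]

lemma forall_eq_zero_of_forall_sum_pow_mul_eq_zero {n : ℕ} {v : ℕ → ℂ}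
    (h : ∀ c : ℂ, c ≠ 0 → ∑ d ∈ Finset.range n, c ^ d * v d = 0) :
    ∀ d ∈ Finset.range n, v d = 0 := by
  have hp : ∑ d ∈ Finset.range n, Polynomial.monomial d (v d) = 0 := by
    refine Polynomial.eq_zero_of_infinite_isRoot _
      ((Set.finite_singleton (0 : ℂ)).infinite_compl.mono fun c hc => ?_)
    simpa [Polynomial.IsRoot, Polynomial.eval_finsetSum, mul_comm] using h c hc
  intro d hd
  simpa [Polynomial.finsetSum_coeff, Polynomial.coeff_monomial, Finset.mem_range.1 hd]
    using congrArg (Polynomial.coeff · d) hp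

lemma aeval_smul_of_isHomogeneous {f : MvPolynomial σ ℂ} {d : ℕ} (hf : f.IsHomogeneous d)
    (l : A) (x : σ → A) : aeval (l • x) f = l ^ d * aeval x f := by
  simp only [aeval_def, eval₂_eq, Finset.mul_sum]
  refine Finset.sum_congr rfl fun m hm => ?_
  have hdeg : m.degree = d := by
    by_contra h
    exact mem_support_iff.1 hm (hf.coeff_eq_zero h)
  simp only [Pi.smul_apply, smul_eq_mul, mul_pow, Finset.prod_mul_distrib,
    Finset.prod_pow_eq_pow_sum, ← hdeg, Finsupp.degree_apply]
  ring

lemma aeval_smul_eq_sum {f : MvPolynomial σ ℂ} {n : ℕ} (hn : f.totalDegree < n) (l : A)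
    (x : σ → A) :
    aeval (l • x) f = ∑ d ∈ Finset.range n, l ^ d * aeval x (homogeneousComponent d f) := by
  conv_lhs => rw [← sum_homogeneousComponent f, map_sum]
  refine (Finset.sum_congr rfl fun d _ => aeval_smul_of_isHomogeneous
    (homogeneousComponent_isHomogeneous d f) l x).trans (Finset.sum_subset
      (Finset.range_mono hn) fun d _ hd => ?_)
  rw [homogeneousComponent_eq_zero d f (by simpa using hd), map_zero, mul_zero]

variable {N : ℕ} {Y : Set (Fin N → ℂ)}

lemma IsCone.homogeneousComponent_mem (hY : IsCone Y) {f : MvPolynomial (Fin N) ℂ}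
    (hf : f ∈ vanishingIdeal ℂ Y) (d : ℕ) : homogeneousComponent d f ∈ vanishingIdeal ℂ Y := by
  rcases le_or_gt d f.totalDegree with hd | hd
  · refine mem_vanishingIdeal_iff_eval.2 fun x hx => ?_
    refine forall_eq_zero_of_forall_sum_pow_mul_eq_zero
      (v := fun d => eval x (homogeneousComponent d f)) (fun c _ => ?_) d
      (Finset.mem_range.2 (Nat.lt_succ_of_le hd))
    exact (aeval_smul_eq_sum f.totalDegree.lt_succ_self c x).symm.trans
      (mem_vanishingIdeal_iff_eval.1 hf _ (hY.2 c x hx))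
  · simp [homogeneousComponent_eq_zero d f hd]

lemma IsCone.aeval_smul_eq_zero (hY : IsCone Y) {x : Fin N → A}
    (hx : ∀ f ∈ vanishingIdeal ℂ Y, aeval x f = 0) (l : A) :
    ∀ f ∈ vanishingIdeal ℂ Y, aeval (l • x) f = 0 := fun f hf => by
  rw [aeval_smul_eq_sum f.totalDegree.lt_succ_self]
  exact Finset.sum_eq_zero fun d _ => by rw [hx _ (hY.homogeneousComponent_mem hf d), mul_zero]

end HomogeneousComponents

section MatricesOfPolynomials

open scoped Matrix

lemma exists_mul_eq_one_of_linearIndependent_row {K m n : Type*} [Field K] [Finite m]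
    [DecidableEq m] [Fintype n] {A : Matrix m n K} (hA : LinearIndependent K A.row) :
    ∃ B : Matrix n m K, A * B = 1 := by
  have := Fintype.ofFinite m
  refine Matrix.mulVec_surjective_iff_exists_right_inverse.1 (LinearMap.range_eq_top.1
    (Submodule.eq_top_of_finrank_eq ?_ : LinearMap.range A.mulVecLin = ⊤))
  rw [Module.finrank_fintype_fun_eq_card]
  exact hA.rank_matrix

lemma mul_det_smul_one_sub {R m n : Type*} [CommRing R] [Fintype m] [DecidableEq m] [Fintype n]
    [DecidableEq n] (A : Matrix m n R) (B : Matrix n m R) :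
    A * ((A * B).det • 1 - B * (A * B).adjugate * A) = 0 := by
  simp only [Matrix.mul_sub, ← Matrix.mul_assoc, Matrix.mul_adjugate]
  simp

variable {σ β : Type*} {N : ℕ}

lemma eval_det_mul_map_C [Fintype β] [DecidableEq β]
    (A : Matrix β (Fin N) (MvPolynomial σ ℂ)) (B : Matrix (Fin N) β ℂ) (p : σ → ℂ) :
    eval p (A * B.map (C : ℂ → MvPolynomial σ ℂ)).det =
      (A.map (eval p) * B).det := by
  rw [RingHom.map_det, RingHom.mapMatrix_apply, Matrix.map_mul, Matrix.map_map]
  simp [Function.comp_def]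

lemma exists_eval_ne_zero_imp_linearIndependent [Finite β] {s : β → Fin N → MvPolynomial σ ℂ}
    {q : σ → ℂ} (hq : LinearIndependent ℂ fun w a => eval q (s w a)) :
    ∃ g, eval q g ≠ 0 ∧ ∀ p, eval p g ≠ 0 → LinearIndependent ℂ fun w a => eval p (s w a) := by
  have := Fintype.ofFinite β
  obtain ⟨B, hB⟩ := exists_mul_eq_one_of_linearIndependent_row (A := (Matrix.of s).map (eval q)) hq
  refine ⟨(Matrix.of s * B.map (C : ℂ → MvPolynomial σ ℂ)).det, ?_, fun p hp => ?_⟩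
  · rw [eval_det_mul_map_C, hB, Matrix.det_one]
    exact one_ne_zero
  · rw [eval_det_mul_map_C, ← isUnit_iff_ne_zero, ← Matrix.isUnit_iff_isUnit_det] at hp
    have hinj : Function.Injective fun u => u ᵥ* (Matrix.of s).map (eval p) := fun u v huv =>
      Matrix.vecMul_injective_of_isUnit hp (by
        simpa [← Matrix.vecMul_vecMul] using congrArg (Matrix.vecMul · B) huv)
    exact Matrix.vecMul_injective_iff.1 hinj

end MatricesOfPolynomials

section TangentFields

open TrivSqZeroExt Module

variable {N : ℕ} {Y : Set (Fin N → ℂ)} {x v : Fin N → ℂ}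

lemma aeval_inl_add_inr (x v : Fin N → ℂ) (f : MvPolynomial (Fin N) ℂ) :
    aeval (fun i => (inl (x i) + inr (v i) : DualNumber ℂ)) f =
      inl (eval x f) + inr (differential x f v) := by
  induction f using MvPolynomial.induction_on with
  | C c => simp [algHom_C, differential_C, algebraMap_eq_inl]
  | add f g hf hg =>
    rw [map_add, hf, hg]
    simp only [map_add, inl_add, inr_add, LinearMap.add_apply]
    abel
  | mul_X f i hf =>
    rw [map_mul, hf, aeval_X, differential_mul, map_mul, eval_X]
    have hX : differential x (X i) v = v i := by
      simp [differential_apply, pderiv_X, Pi.single_apply, apply_ite (eval x)]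
    refine TrivSqZeroExt.ext ?_ ?_ <;> simp [hX, mul_comm, add_comm]

lemma mem_tanSpan_iff_aeval_dualNumber (hx : x ∈ Y) :
    v ∈ tanSpan Y x ↔ ∀ f ∈ vanishingIdeal ℂ Y,
      aeval (fun i => (inl (x i) + inr (v i) : DualNumber ℂ)) f = 0 := by
  refine mem_tanSpan_iff.trans (forall₂_congr fun f hf => ?_)
  rw [aeval_inl_add_inr, mem_vanishingIdeal_iff_eval.1 hf x hx, inl_zero, zero_add]
  exact (inr_injective.eq_iff' (inr_zero ℂ)).symm

lemma IsCone.self_mem_tanSpan (hY : IsCone Y) (hx : x ∈ Y) : x ∈ tanSpan Y x := by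
  rw [mem_tanSpan_iff_aeval_dualNumber hx]
  have hx0 : ∀ f ∈ vanishingIdeal ℂ Y, aeval (fun i => (inl (x i) : DualNumber ℂ)) f = 0 :=
    fun f hf => by
      simpa [mem_vanishingIdeal_iff_eval.1 hf x hx] using aeval_inl_add_inr x 0 f
  have hsmul : (fun i => inl (x i) + inr (x i) : Fin N → DualNumber ℂ) =
      (1 + DualNumber.eps : DualNumber ℂ) • fun i => inl (x i) := by
    ext i <;> simp
  rw [hsmul]
  exact hY.aeval_smul_eq_zero hx0 _

lemma IsCone.tanSpan_smul_le (hY : IsCone Y) (hx : x ∈ Y) {c : ℂ} (hc : c ≠ 0) :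
    tanSpan Y (c • x) ≤ tanSpan Y x := fun v hv => by
  rw [mem_tanSpan_iff_aeval_dualNumber (hY.2 c x hx)] at hv
  have hv' : c⁻¹ • v ∈ tanSpan Y x := by
    rw [mem_tanSpan_iff_aeval_dualNumber hx]
    have hsmul : (fun i => inl (x i) + inr ((c⁻¹ • v) i) : Fin N → DualNumber ℂ) =
        (inl c⁻¹ : DualNumber ℂ) • fun i => inl ((c • x) i) + inr (v i) := by
      ext i <;> simp [hc]
    rw [hsmul]
    exact hY.aeval_smul_eq_zero hv _
  simpa [smul_smul, hc] using Submodule.smul_mem _ c hv'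

/-- A polynomial vector field on affine space that is tangent to `Y` along `Y`. -/
def IsTangentField (Y : Set (Fin N → ℂ)) (s : Fin N → MvPolynomial (Fin N) ℂ) : Prop :=
  ∀ p ∈ Y, (fun a => eval p (s a)) ∈ tanSpan Y p

namespace IsTangentField

lemma linearCombination {β : Type*} [Fintype β] {s : β → Fin N → MvPolynomial (Fin N) ℂ}
    (hs : ∀ b, IsTangentField Y (s b)) (c : β → ℂ) :
    IsTangentField Y fun a => ∑ b, C (c b) * s b a := fun p hp => by
  convert Submodule.sum_mem (tanSpan Y p) fun b (_ : b ∈ Finset.univ) =>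
    Submodule.smul_mem _ (c b) (hs b p hp)
  simp

lemma homogeneousComponent (hY : IsCone Y) {s : Fin N → MvPolynomial (Fin N) ℂ}
    (hs : IsTangentField Y s) (d : ℕ) :
    IsTangentField Y fun a => MvPolynomial.homogeneousComponent d (s a) := fun p hp => by
  obtain ⟨n, hn⟩ := Finite.exists_le fun a => (s a).totalDegree
  have heval (c : ℂ) (a : Fin N) : eval (c • p) (s a) =
      ∑ e ∈ Finset.range (d + n + 1),
        c ^ e * eval p (MvPolynomial.homogeneousComponent e (s a)) :=
    aeval_smul_eq_sum (Nat.lt_succ_of_le ((hn a).trans (n.le_add_left d))) c p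
  rw [mem_tanSpan_iff]
  intro f hf
  refine forall_eq_zero_of_forall_sum_pow_mul_eq_zero (v := fun e => differential p f
    fun a => eval p (MvPolynomial.homogeneousComponent e (s a))) (fun c hc => ?_) d
    (Finset.mem_range.2 (Nat.lt_succ_of_le (d.le_add_right n)))
  have htan := mem_tanSpan_iff.1 (hY.tanSpan_smul_le hp hc (hs _ (hY.2 c p hp))) f hf
  simp only [← smul_eq_mul, ← map_smul, ← map_sum]
  convert htan using 2
  exact funext fun a => by simp [heval]

end IsTangentField

/-- A matrix `S` of polynomials that projects onto the tangent spaces of `Y`, up to the scalar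
polynomial `g`: its columns are tangent to `Y`, and `g • 1 - S` annihilates every vector
annihilated by the gradients of the polynomials vanishing on `Y`. The second condition is phrased
on the rows, so that it remains meaningful for points of `Y` over any `ℂ`-algebra. -/
structure IsTangentProjector (Y : Set (Fin N → ℂ)) (g : MvPolynomial (Fin N) ℂ)
    (S : Matrix (Fin N) (Fin N) (MvPolynomial (Fin N) ℂ)) : Prop where
  isTangentField : ∀ b, IsTangentField Y (S.col b)
  row_mem_span : ∀ a, (g • (1 : Matrix (Fin N) (Fin N) (MvPolynomial (Fin N) ℂ)) - S).row a ∈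
    Submodule.span (MvPolynomial (Fin N) ℂ)
      ((fun f b => pderiv b f) '' (vanishingIdeal ℂ Y : Set (MvPolynomial (Fin N) ℂ)))

lemma IsTangentProjector.mulVec_eq_smul {A : Type*} [CommRing A] [Algebra ℂ A]
    {g : MvPolynomial (Fin N) ℂ} {S : Matrix (Fin N) (Fin N) (MvPolynomial (Fin N) ℂ)}
    (h : IsTangentProjector Y g S) {y w : Fin N → A}
    (hw : ∀ f ∈ vanishingIdeal ℂ Y, ∑ b, w b * aeval y (pderiv b f) = 0) :
    (S.map (aeval y)).mulVec w = aeval y g • w := by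
  have hspan (r : Fin N → MvPolynomial (Fin N) ℂ) (hr : r ∈ Submodule.span (MvPolynomial (Fin N) ℂ)
      ((fun f b => pderiv b f) '' (vanishingIdeal ℂ Y : Set (MvPolynomial (Fin N) ℂ)))) :
      ∑ b, w b * aeval y (r b) = 0 := by
    induction hr using Submodule.span_induction with
    | mem r hr =>
      obtain ⟨f, hf, rfl⟩ := hr
      exact hw f hf
    | zero => simp
    | add r r' _ _ hr hr' =>
      simp only [Pi.add_apply, map_add, mul_add, Finset.sum_add_distrib, hr, hr', add_zero]
    | smul q r _ hr =>
      simp only [Pi.smul_apply, smul_eq_mul, map_mul, mul_left_comm (w _), ← Finset.mul_sum, hr,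
        mul_zero]
  refine funext fun a => ?_
  have ha := hspan _ (h.row_mem_span a)
  simp only [Matrix.row, Matrix.sub_apply, Matrix.smul_apply, Matrix.one_apply, smul_eq_mul,
    mul_ite, mul_one, mul_zero, map_sub, mul_sub, Finset.sum_sub_distrib, apply_ite (aeval y),
    map_zero, Finset.sum_ite_eq, Finset.mem_univ, if_true, sub_eq_zero] at ha
  simp only [Matrix.mulVec, dotProduct, Matrix.map_apply, Pi.smul_apply, smul_eq_mul,
    mul_comm (aeval y g), ha, mul_comm]

lemma exists_jacobian_mul_eq_one (Y : Set (Fin N → ℂ)) (x : Fin N → ℂ) :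
    ∃ ρ, ρ + finrank ℂ (tanSpan Y x) = N ∧ ∃ f : Fin ρ → MvPolynomial (Fin N) ℂ,
      (∀ i, f i ∈ vanishingIdeal ℂ Y) ∧ ∃ C : Matrix (Fin N) (Fin ρ) ℂ,
        (Matrix.of fun i b => eval x (pderiv b (f i))) * C = 1 := by
  refine ⟨_, finrank_map_differential_add_finrank_tanSpan Y x, ?_⟩
  let b := finBasis ℂ (((vanishingIdeal ℂ Y).restrictScalars ℂ).map (differential x))
  have hb : ∀ i, ∃ f ∈ vanishingIdeal ℂ Y, differential x f = b i := fun i => (b i).2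
  choose f hf hfb using hb
  refine ⟨f, hf, exists_mul_eq_one_of_linearIndependent_row ?_⟩
  have hdiff : piEquiv (Fin N) ℂ ℂ ∘ (Matrix.of fun i b => eval x (pderiv b (f i))).row =
      fun i => (b i : Dual ℂ (Fin N → ℂ)) := by
    refine _root_.funext fun i => LinearMap.ext fun v => ?_
    rw [← hfb, differential_apply]
    exact piEquiv_apply_apply ..
  exact .of_comp (piEquiv (Fin N) ℂ ℂ).toLinearMap
    (hdiff ▸ b.linearIndependent.map' (Submodule.subtype _) (by simp))

lemma tanSpan_eq_ker_jacobian {ρ : ℕ} {f : Fin ρ → MvPolynomial (Fin N) ℂ}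
    (hf : ∀ i, f i ∈ vanishingIdeal ℂ Y) (hρ : ρ + finrank ℂ (tanSpan Y x) = N)
    (hsurj : Function.Surjective (Matrix.of fun i b => eval x (pderiv b (f i))).mulVec) :
    tanSpan Y x = LinearMap.ker (Matrix.of fun i b => eval x (pderiv b (f i))).mulVecLin := by
  refine Submodule.eq_of_le_of_finrank_eq (fun v hv => LinearMap.mem_ker.2 (_root_.funext
    fun i => ?_)) ?_
  · have hfi := mem_tanSpan_iff.1 hv (f i) (hf i)
    rw [differential_apply] at hfi
    simpa [Matrix.mulVec, dotProduct, mul_comm] using hfi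
  · have hrank := LinearMap.finrank_range_add_finrank_ker
      (Matrix.of fun i b => eval x (pderiv b (f i))).mulVecLin
    rw [LinearMap.range_eq_top.2 hsurj, finrank_top, finrank_fintype_fun_eq_card,
      finrank_fintype_fun_eq_card, Fintype.card_fin, Fintype.card_fin] at hrank
    omega

lemma exists_isTangentProjector {r : ℕ}
    (hY : ∀ p ∈ Y, p ≠ 0 → finrank ℂ (tanSpan Y p) = r) (hx : x ∈ Y) (hx0 : x ≠ 0) :
    ∃ g S, IsTangentProjector Y g S ∧ eval x g ≠ 0 := by
  obtain ⟨ρ, hρ, f, hf, C₀, hC₀⟩ := exists_jacobian_mul_eq_one Y x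
  obtain ⟨c, hc⟩ := Function.ne_iff.1 hx0
  let J : Matrix (Fin ρ) (Fin N) (MvPolynomial (Fin N) ℂ) := Matrix.of fun i b => pderiv b (f i)
  let M : Matrix (Fin N) (Fin ρ) (MvPolynomial (Fin N) ℂ) := Matrix.map C₀ C
  let E : Matrix (Fin N) (Fin N) (MvPolynomial (Fin N) ℂ) :=
    (J * M).det • 1 - M * (J * M).adjugate * J
  have hJE : J * E = 0 := mul_det_smul_one_sub J M
  have hdet (p : Fin N → ℂ) : eval p (J * M).det = (J.map (eval p) * C₀).det :=
    eval_det_mul_map_C J C₀ p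
  refine ⟨X c * (J * M).det * (J * M).det, (X c * (J * M).det) • E,
    ⟨fun b p hp => ?_, fun a => ?_⟩, ?_⟩
  · have hcol : (fun a => eval p (((X c * (J * M).det) • E).col b a)) =
        (p c * eval p (J * M).det) • fun a => eval p (E a b) := by
      ext a
      simp [Matrix.col]
    rw [hcol]
    by_cases h0 : p c * eval p (J * M).det = 0
    · rw [h0, zero_smul]
      exact zero_mem _
    have hp0 : p ≠ 0 := by
      rintro rfl
      simp at h0
    have hunit := isUnit_iff_ne_zero.2 (hdet p ▸ right_ne_zero_of_mul h0)
    refine Submodule.smul_mem _ _ ?_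
    rw [tanSpan_eq_ker_jacobian hf (by rw [hY p hp hp0, ← hY x hx hx0, hρ])
      (Matrix.mulVec_surjective_iff_exists_right_inverse.2
        ⟨C₀ * (J.map (eval p) * C₀)⁻¹,
          by rw [← Matrix.mul_assoc]; exact Matrix.mul_nonsing_inv _ hunit⟩), LinearMap.mem_ker]
    ext i
    simpa [J, Matrix.mulVec, dotProduct, Matrix.mul_apply] using
      congrArg (eval p) (congrFun₂ hJE i b)
  · have hrow : ((X c * (J * M).det * (J * M).det) •
        (1 : Matrix (Fin N) (Fin N) (MvPolynomial (Fin N) ℂ)) - (X c * (J * M).det) • E).row a =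
        ∑ i, ((X c * (J * M).det) * (M * (J * M).adjugate) a i) • fun b => pderiv b (f i) := by
      rw [← smul_smul, ← smul_sub, sub_sub_cancel]
      generalize M * (J * M).adjugate = P
      ext b : 1
      simp [Matrix.row, J, Matrix.mul_apply, Finset.mul_sum, mul_assoc]
    rw [hrow]
    exact Submodule.sum_mem _ fun i _ =>
      Submodule.smul_mem _ _ (Submodule.subset_span ⟨f i, hf i, rfl⟩)
  · have hx1 : J.map (eval x) * C₀ = 1 := hC₀
    simpa [hdet, hx1] using hc

lemma exists_isTangentField_eval_eq {r : ℕ}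
    (hY : ∀ p ∈ Y, p ≠ 0 → finrank ℂ (tanSpan Y p) = r) (hx : x ∈ Y) (hx0 : x ≠ 0)
    (hv : v ∈ tanSpan Y x) : ∃ s, IsTangentField Y s ∧ ∀ a, eval x (s a) = v a := by
  obtain ⟨g, S, hS, hg⟩ := exists_isTangentProjector hY hx hx0
  refine ⟨_, .linearCombination hS.isTangentField ((eval x g)⁻¹ • v), fun a => ?_⟩
  have hSv : (S.map (eval x)).mulVec v = eval x g • v := hS.mulVec_eq_smul fun f hf =>
    (differential_apply x v f).symm.trans (mem_tanSpan_iff.1 hv f hf)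
  calc eval x (∑ b, C (((eval x g)⁻¹ • v) b) * S.col b a)
      = (eval x g)⁻¹ * (S.map (eval x)).mulVec v a := by
        simp [Matrix.mulVec, dotProduct, Matrix.col, Finset.mul_sum, mul_assoc, mul_comm,
          mul_left_comm]
    _ = v a := by rw [hSv, Pi.smul_apply, smul_eq_mul, inv_mul_cancel_left₀ hg]

end TangentFields

section GenericTuples

variable {N m m' : ℕ} {Y : Set (Fin N → ℂ)} {P Q : (Fin m → Fin N → ℂ) → Prop}

/-- The ideal of the polynomials vanishing on all `m`-tuples of points of `Y`, a tuple being
encoded by its `m * N` coordinates. -/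
def tupleIdeal (m : ℕ) (Y : Set (Fin N → ℂ)) : Ideal (MvPolynomial (Fin m × Fin N) ℂ) :=
  vanishingIdeal ℂ (Function.uncurry '' {p : Fin m → Fin N → ℂ | ∀ i, p i ∈ Y})

lemma mem_tupleIdeal_iff {g : MvPolynomial (Fin m × Fin N) ℂ} :
    g ∈ tupleIdeal m Y ↔ ∀ p : Fin m → Fin N → ℂ, (∀ i, p i ∈ Y) → eval p.uncurry g = 0 := by
  simp [tupleIdeal]

lemma notMem_tupleIdeal_iff {g : MvPolynomial (Fin m × Fin N) ℂ} :
    g ∉ tupleIdeal m Y ↔ ∃ p : Fin m → Fin N → ℂ, (∀ i, p i ∈ Y) ∧ eval p.uncurry g ≠ 0 := by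
  simp [mem_tupleIdeal_iff]

lemma IrrAlg.isPrime_tupleIdeal (hY : IrrAlg Y) (m : ℕ) : (tupleIdeal m Y).IsPrime := by
  induction m with
  | zero =>
    have huniv : Function.uncurry '' {p : Fin 0 → Fin N → ℂ | ∀ i, p i ∈ Y} = Set.univ := by
      refine Set.eq_univ_of_forall fun x => ⟨Fin.elim0, fun i => i.elim0, ?_⟩
      exact _root_.funext fun a => a.1.elim0
    rw [tupleIdeal, huniv]
    exact isPrime_vanishingIdeal_univ
  | succ m ih =>
    let cons (x : Fin N → ℂ) (q : Fin m × Fin N → ℂ) : Fin (m + 1) × Fin N → ℂ :=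
      Function.uncurry (Fin.cons x (Function.curry q) : Fin (m + 1) → Fin N → ℂ)
    have himage : Function.uncurry '' {p : Fin (m + 1) → Fin N → ℂ | ∀ i, p i ∈ Y} =
        Set.image2 cons Y (Function.uncurry '' {p : Fin m → Fin N → ℂ | ∀ i, p i ∈ Y}) := by
      ext a
      constructor
      · rintro ⟨p, hp, rfl⟩
        refine ⟨p 0, hp 0, _, ⟨Fin.tail p, fun i => hp i.succ, rfl⟩, ?_⟩
        simp only [cons, Function.curry_uncurry, Fin.cons_self_tail]
      · rintro ⟨x, hx, _, ⟨q, hq, rfl⟩, rfl⟩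
        exact ⟨Fin.cons x q, Fin.cases hx hq, rfl⟩
    rw [tupleIdeal, himage]
    refine isPrime_vanishingIdeal_image2 (fun q => ?_) (fun x => ?_) hY.isPrime_vanishingIdeal ih
    · exact ⟨fun a => Fin.cases (X a.2) (fun i => C (q (i, a.2))) a.1, fun x ⟨i, b⟩ => by
        cases i using Fin.cases <;> simp [cons]⟩
    · exact ⟨fun a => Fin.cases (C (x a.2)) (fun i => X (i, a.2)) a.1, fun q ⟨i, b⟩ => by
        cases i using Fin.cases <;> simp [cons]⟩

lemma generically_iff_exists_notMem_tupleIdeal :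
    Generically m Y P ↔ ∃ g ∉ tupleIdeal m Y, ∀ p : Fin m → Fin N → ℂ,
      (∀ i, p i ∈ Y ∧ p i ≠ 0) → eval p.uncurry g ≠ 0 → P p := by
  constructor
  · rintro ⟨B, ⟨I, rfl⟩, hB, hP⟩
    obtain ⟨q, hq, f, hf, hfq⟩ : ∃ q : Fin m → Fin N → ℂ, (∀ i, q i ∈ Y) ∧
        ∃ f ∈ I, eval q.uncurry f ≠ 0 := by
      simpa [Set.subset_def, Function.uncurry_def] using hB
    exact ⟨f, notMem_tupleIdeal_iff.2 ⟨q, hq, hfq⟩, fun p hp hfp => hP p hp fun h => hfp (h f hf)⟩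
  · rintro ⟨g, hg, hP⟩
    obtain ⟨q, hq, hgq⟩ := notMem_tupleIdeal_iff.1 hg
    exact ⟨{p | eval p.uncurry g = 0}, ⟨{g}, by simp [Function.uncurry_def]⟩,
      fun h => hgq (h hq), hP⟩

namespace Generically

lemma mono (hP : Generically m Y P) (h : ∀ p, (∀ i, p i ∈ Y ∧ p i ≠ 0) → P p → Q p) :
    Generically m Y Q :=
  let ⟨B, hB, hYB, hP⟩ := hP
  ⟨B, hB, hYB, fun p hp hpB => h p hp (hP p hp hpB)⟩

lemma and (hY : IrrAlg Y) (hP : Generically m Y P) (hQ : Generically m Y Q) :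
    Generically m Y fun p => P p ∧ Q p := by
  rw [generically_iff_exists_notMem_tupleIdeal] at hP hQ ⊢
  obtain ⟨f, hf, hP⟩ := hP
  obtain ⟨g, hg, hQ⟩ := hQ
  have := hY.isPrime_tupleIdeal m
  refine ⟨f * g, Ideal.IsPrime.mul_notMem this hf hg, fun p hp hfg => ?_⟩
  rw [map_mul] at hfg
  exact ⟨hP p hp (left_ne_zero_of_mul hfg), hQ p hp (right_ne_zero_of_mul hfg)⟩

lemma exists_tuple (hY : IrrAlg Y) (hne : ∃ x ∈ Y, x ≠ 0) (hP : Generically m Y P) :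
    ∃ p : Fin m → Fin N → ℂ, (∀ i, p i ∈ Y ∧ p i ≠ 0) ∧ P p := by
  obtain ⟨x, hx, hx0⟩ := hne
  obtain ⟨c, hc⟩ := Function.ne_iff.1 hx0
  obtain ⟨g, hg, hP⟩ := generically_iff_exists_notMem_tupleIdeal.1 hP
  have hprod : ∏ i : Fin m, X (i, c) ∉ tupleIdeal m Y := notMem_tupleIdeal_iff.2
    ⟨fun _ => x, fun _ => hx, by
      rw [map_prod]
      exact Finset.prod_ne_zero_iff.2 fun i _ => by simpa using hc⟩
  obtain ⟨p, hp, hgp⟩ := notMem_tupleIdeal_iff.1 ((hY.isPrime_tupleIdeal m).mul_notMem hg hprod)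
  rw [map_mul, map_prod, mul_ne_zero_iff, Finset.prod_ne_zero_iff] at hgp
  have hp' (i : Fin m) : p i ∈ Y ∧ p i ≠ 0 :=
    ⟨hp i, fun h => hgp.2 i (Finset.mem_univ i) (by simp [Function.uncurry_def, h])⟩
  exact ⟨p, hp', hP p hp' hgp.1⟩

lemma comp_injective (hne : Y.Nonempty) (hP : Generically m Y P) {e : Fin m → Fin m'}
    (he : Function.Injective e) : Generically m' Y fun p => P fun i => p (e i) := by
  rw [generically_iff_exists_notMem_tupleIdeal] at hP ⊢
  obtain ⟨g, hg, hP⟩ := hP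
  obtain ⟨q, hq, hgq⟩ := notMem_tupleIdeal_iff.1 hg
  have heval (p : Fin m' → Fin N → ℂ) :
      eval p.uncurry (rename (Prod.map e id) g) = eval (Function.uncurry fun i => p (e i)) g := by
    rw [eval_rename]
    rfl
  obtain ⟨y, hy⟩ := hne
  refine ⟨rename (Prod.map e id) g, notMem_tupleIdeal_iff.2
    ⟨Function.extend e q fun _ => y, fun j => ?_, ?_⟩, fun p hp hgp => ?_⟩
  · by_cases h : ∃ i, e i = j
    · obtain ⟨i, rfl⟩ := h
      simpa [he.extend_apply] using hq i
    · rwa [Function.extend_apply' _ _ _ h]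
  · simpa [heval, he.extend_apply] using hgq
  · exact hP _ (fun i => hp _) (heval p ▸ hgp)

end Generically

end GenericTuples

section Semicontinuity

variable {N r : ℕ} {Y : Set (Fin N → ℂ)}

lemma exists_finrank_sup_iSup_tanSpan_le {m : ℕ}
    (hr : ∀ p ∈ Y, p ≠ 0 → Module.finrank ℂ (tanSpan Y p) = r) (Λ : Submodule ℂ (Fin N → ℂ))
    {q : Fin m → Fin N → ℂ} (hq : ∀ i, q i ∈ Y ∧ q i ≠ 0) :
    ∃ g, eval q.uncurry g ≠ 0 ∧ ∀ p : Fin m → Fin N → ℂ, (∀ i, p i ∈ Y) →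
      eval p.uncurry g ≠ 0 →
      Module.finrank ℂ (Λ ⊔ ⨆ i, tanSpan Y (q i) : Submodule ℂ (Fin N → ℂ)) ≤
        Module.finrank ℂ (Λ ⊔ ⨆ i, tanSpan Y (p i) : Submodule ℂ (Fin N → ℂ)) := by
  obtain ⟨b, hb, hspan, hli⟩ := exists_linearIndependent ℂ
    ((Λ : Set (Fin N → ℂ)) ∪ ⋃ i, (tanSpan Y (q i) : Set (Fin N → ℂ)))
  have : Finite b := hli.finite
  have hfield (w : b) : ∃ s : Fin N → MvPolynomial (Fin m × Fin N) ℂ,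
      (∀ a, eval q.uncurry (s a) = w.1 a) ∧ ∀ p : Fin m → Fin N → ℂ, (∀ i, p i ∈ Y) →
        (fun a => eval p.uncurry (s a)) ∈ Λ ⊔ ⨆ i, tanSpan Y (p i) := by
    rcases hb w.2 with h | h
    · exact ⟨fun a => C (w.1 a), by simp, fun p _ => by simpa using Submodule.mem_sup_left h⟩
    · obtain ⟨i, hi⟩ := Set.mem_iUnion.1 h
      obtain ⟨s, hs, hsw⟩ := exists_isTangentField_eval_eq hr (hq i).1 (hq i).2 hi
      refine ⟨fun a => rename (Prod.mk i) (s a), fun a => ?_, fun p hp => ?_⟩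
      · rw [eval_rename]
        exact hsw a
      · simp only [eval_rename]
        exact Submodule.mem_sup_right (Submodule.mem_iSup_of_mem i (hs _ (hp i)))
  choose s hsq hs using hfield
  obtain ⟨g, hgq, hg⟩ := exists_eval_ne_zero_imp_linearIndependent (s := s) (q := q.uncurry)
    (by simpa only [hsq] using hli)
  have := Fintype.ofFinite b
  refine ⟨g, hgq, fun p hp hgp => ?_⟩
  calc Module.finrank ℂ (Λ ⊔ ⨆ i, tanSpan Y (q i) : Submodule ℂ (Fin N → ℂ))
      = Module.finrank ℂ (Submodule.span ℂ b) := by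
        rw [hspan, Submodule.span_union, Submodule.span_iUnion, Submodule.span_eq,
          iSup_congr fun i => Submodule.span_eq (tanSpan Y (q i))]
    _ = Fintype.card b := by rw [← finrank_span_eq_card hli, Subtype.range_coe]
    _ = Module.finrank ℂ (Submodule.span ℂ (Set.range fun w a => eval p.uncurry (s w a))) :=
        (finrank_span_eq_card (hg _ hgp)).symm
    _ ≤ _ := Submodule.finrank_mono
        (Submodule.span_le.2 (Set.range_subset_iff.2 fun w => hs w p hp))

lemma exists_generically_finrank_iSup_tanSpan_eq (hne : ∃ x ∈ Y, x ≠ 0)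
    (hr : ∀ p ∈ Y, p ≠ 0 → Module.finrank ℂ (tanSpan Y p) = r) (m : ℕ) :
    ∃ d, (∀ p : Fin m → Fin N → ℂ, (∀ i, p i ∈ Y ∧ p i ≠ 0) →
        Module.finrank ℂ (⨆ i, tanSpan Y (p i) : Submodule ℂ (Fin N → ℂ)) ≤ d) ∧
      Generically m Y fun p =>
        Module.finrank ℂ (⨆ i, tanSpan Y (p i) : Submodule ℂ (Fin N → ℂ)) = d := by
  obtain ⟨x, hx, hx0⟩ := hne
  let rank (p : Fin m → Fin N → ℂ) : ℕ :=
    Module.finrank ℂ (⨆ i, tanSpan Y (p i) : Submodule ℂ (Fin N → ℂ))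
  let S : Set ℕ := rank '' {p | ∀ i, p i ∈ Y ∧ p i ≠ 0}
  have hbdd : BddAbove S := ⟨N, by
    rintro _ ⟨p, -, rfl⟩
    simpa using Submodule.finrank_le (⨆ i, tanSpan Y (p i) : Submodule ℂ (Fin N → ℂ))⟩
  obtain ⟨q, hq, hqS⟩ := Nat.sSup_mem (s := S) ⟨_, fun _ => x, fun _ => ⟨hx, hx0⟩, rfl⟩ hbdd
  obtain ⟨g, hgq, hg⟩ := exists_finrank_sup_iSup_tanSpan_le hr ⊥ hq
  refine ⟨sSup S, fun p hp => le_csSup hbdd ⟨p, hp, rfl⟩, generically_iff_exists_notMem_tupleIdeal.2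
    ⟨g, notMem_tupleIdeal_iff.2 ⟨q, fun i => (hq i).1, hgq⟩, fun p hp hgp => ?_⟩⟩
  refine le_antisymm (le_csSup hbdd ⟨p, hp, rfl⟩) ?_
  have hle := hg p (fun i => (hp i).1) hgp
  rwa [bot_sup_eq, bot_sup_eq, show Module.finrank ℂ _ = _ from hqS] at hle

end Semicontinuity

section EquationsOfSums

open TrivSqZeroExt

variable {N m j : ℕ} {Y : Set (Fin N → ℂ)} {F : MvPolynomial (Fin N) ℂ}

/-- The ideal of the polynomials vanishing on all sums of `m` points of `Y`, that is, of the
equations of the `m`-fold join of `Y` with itself. -/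
def sumIdeal (m : ℕ) (Y : Set (Fin N → ℂ)) : Ideal (MvPolynomial (Fin N) ℂ) :=
  vanishingIdeal ℂ ((fun p : Fin m → Fin N → ℂ => ∑ i, p i) '' {p | ∀ i, p i ∈ Y})

lemma mem_sumIdeal_iff :
    F ∈ sumIdeal m Y ↔ ∀ p : Fin m → Fin N → ℂ, (∀ i, p i ∈ Y) → eval (∑ i, p i) F = 0 := by
  simp [sumIdeal]

lemma sum_mem_secant {p : Fin (j + 1) → Fin N → ℂ} (hp : ∀ i, p i ∈ Y) :
    ∑ i, p i ∈ secant j Y := by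
  induction j with
  | zero => exact fun T ⟨_, hYT⟩ => hYT (by simpa using hp 0)
  | succ j ih =>
    rw [Fin.sum_univ_castSucc]
    exact fun T ⟨_, hsub⟩ => hsub ⟨_, ih fun i => hp i.castSucc, _, hp _, rfl⟩

lemma exists_secant_eq_zcl (j : ℕ) (Y : Set (Fin N → ℂ)) : ∃ S, secant j Y = zcl S := by
  cases j <;> exact ⟨_, rfl⟩

lemma eq_zero_of_forall_pderiv_mem {σ : Type*} {S : Set (MvPolynomial σ ℂ)}
    (h0 : ∀ f ∈ S, eval 0 f = 0) (hS : ∀ f ∈ S, ∀ a, pderiv a f ∈ S) {f : MvPolynomial σ ℂ}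
    (hf : f ∈ S) : f = 0 := by
  ext d
  rw [coeff_zero]
  induction k : d.degree generalizing d f with
  | zero =>
    rw [(Finsupp.degree_eq_zero_iff d).1 k]
    simpa [eval_zero, constantCoeff_eq] using h0 f hf
  | succ k ih =>
    have hd0 : d ≠ 0 := by
      rintro rfl
      simp at k
    obtain ⟨a, ha⟩ := Finsupp.ne_iff.1 hd0
    obtain ⟨d, rfl⟩ : ∃ d', d = d' + Finsupp.single a 1 :=
      ⟨_, (tsub_add_cancel_of_le (Finsupp.single_le_iff.2 (Nat.one_le_iff_ne_zero.2 ha))).symm⟩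
    have hcoeff := ih (hS f hf a) d (by simpa using k)
    rw [coeff_pderiv] at hcoeff
    exact (mul_eq_zero.1 hcoeff).resolve_right (Nat.cast_add_one_ne_zero _)

lemma exists_mem_sumIdeal_differential_ne_zero (h0 : 0 ∈ Y) (hj : secant j Y ≠ Set.univ) :
    ∃ F ∈ sumIdeal (j + 1) Y, ∃ p : Fin (j + 1) → Fin N → ℂ,
      (∀ i, p i ∈ Y) ∧ differential (∑ i, p i) F ≠ 0 := by
  obtain ⟨x, hx⟩ := (Set.ne_univ_iff_exists_notMem _).1 hj
  obtain ⟨S, hS⟩ := exists_secant_eq_zcl j Y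
  rw [hS, zcl_eq_zeroLocus, mem_zeroLocus_iff_eval] at hx
  push Not at hx
  obtain ⟨f, hf, hfx⟩ := hx
  have hfsum : f ∈ sumIdeal (j + 1) Y := mem_sumIdeal_iff.2 fun p hp => by
    have hmem := sum_mem_secant hp
    rw [hS, zcl_eq_zeroLocus, mem_zeroLocus_iff_eval] at hmem
    exact hmem f hf
  by_contra! hcon
  have hzero : f = 0 := eq_zero_of_forall_pderiv_mem
    (fun F hF => by simpa using mem_sumIdeal_iff.1 hF 0 fun _ => h0)
    (fun F hF a => mem_sumIdeal_iff.2 fun p hp => by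
      simpa [differential_apply, Pi.single_apply] using
        LinearMap.congr_fun (hcon F hF p hp) (Pi.single a 1)) hfsum
  simp [hzero] at hfx

lemma differential_sum_apply_eq_zero (hF : F ∈ sumIdeal m Y) {p : Fin m → Fin N → ℂ}
    (hp : ∀ i, p i ∈ Y) {i : Fin m} {v : Fin N → ℂ} (hv : v ∈ tanSpan Y (p i)) :
    differential (∑ k, p k) F v = 0 := by
  obtain ⟨c, hc⟩ : ∃ c, ∀ y, ∑ k, Function.update p i y k = y + c :=
    ⟨_, fun y => Finset.sum_update_of_mem (Finset.mem_univ i) p y⟩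
  have hpc : ∑ k, p k = p i + c := by simpa using hc (p i)
  have hshift : bind₁ (fun a => X a + C (c a)) F ∈ vanishingIdeal ℂ Y :=
    mem_vanishingIdeal_iff_eval.2 fun y hy => by
      rw [eval, eval₂Hom_bind₁, ← mem_sumIdeal_iff.1 hF (Function.update p i y) fun k => by
        obtain rfl | hk := eq_or_ne k i <;> simp [*], hc]
      congr 2
      ext a
      simp
  have hdual := (mem_tanSpan_iff_aeval_dualNumber (hp i)).1 hv _ hshift
  have hpoint : (fun a => aeval (fun a => (inl (p i a) + inr (v a) : DualNumber ℂ))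
      (X a + C (c a) : MvPolynomial (Fin N) ℂ)) =
      fun a => inl ((∑ k, p k) a) + inr (v a) := by
    rw [hpc]
    ext a <;> simp [algHom_C, algebraMap_eq_inl]
  rw [aeval_bind₁, hpoint, aeval_inl_add_inr] at hdual
  simpa using congrArg snd hdual

/-- The gradient of `F` at the sum of all but the first point of a tuple, as a vector of polynomials
in the coordinates of the tuple. -/
def sumGradient (j : ℕ) (F : MvPolynomial (Fin N) ℂ) (a : Fin N) :
    MvPolynomial (Fin (j + 1) × Fin N) ℂ :=
  bind₁ (fun b => ∑ i : Fin j, X (i.succ, b)) (pderiv a F)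

lemma eval_sum_sumGradient_mul (p : Fin (j + 1) → Fin N → ℂ)
    (s : Fin N → MvPolynomial (Fin (j + 1) × Fin N) ℂ) :
    eval p.uncurry (∑ a, sumGradient j F a * s a) =
      differential (∑ i : Fin j, p i.succ) F fun a => eval p.uncurry (s a) := by
  have heval (G : MvPolynomial (Fin N) ℂ) :
      eval p.uncurry (bind₁ (fun b => ∑ i : Fin j, X (i.succ, b)) G) =
        eval (∑ i : Fin j, p i.succ) G := by
    rw [eval, eval₂Hom_bind₁]
    congr 2
    ext b
    simp
  simp only [differential_apply, map_sum, map_mul, sumGradient, heval, mul_comm]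

lemma sum_sumGradient_mul_rename_mem (hF : F ∈ sumIdeal j Y) {s : Fin N → MvPolynomial (Fin N) ℂ}
    (hs : IsTangentField Y s) (i : Fin j) :
    ∑ a, sumGradient j F a * rename (Prod.mk i.succ) (s a) ∈ tupleIdeal (j + 1) Y :=
  mem_tupleIdeal_iff.2 fun p hp => by
    rw [eval_sum_sumGradient_mul]
    simp only [eval_rename]
    exact differential_sum_apply_eq_zero hF (fun i => hp i.succ) (hs _ (hp i.succ))

lemma sum_sumGradient_mul_X_zero_notMem (hY : Nondeg Y) {p : Fin j → Fin N → ℂ}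
    (hp : ∀ i, p i ∈ Y) (hF : differential (∑ i, p i) F ≠ 0) :
    ∑ a, sumGradient j F a * X (0, a) ∉ tupleIdeal (j + 1) Y := by
  obtain ⟨x, hx, hxF⟩ : ∃ x ∈ Y, differential (∑ i, p i) F x ≠ 0 := by
    by_contra! h
    refine hF (LinearMap.ker_eq_top.1 (eq_top_iff.2 ?_))
    rw [← show Submodule.span ℂ Y = ⊤ from hY, Submodule.span_le]
    exact h
  refine notMem_tupleIdeal_iff.2 ⟨Fin.cons x p, Fin.cases hx hp, ?_⟩
  rw [eval_sum_sumGradient_mul]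
  simpa using hxF

end EquationsOfSums

section GenericZeros

lemma derivation_aeval {R σ A M : Type*} [CommRing R] [Fintype σ] [CommRing A] [Algebra R A]
    [AddCommGroup M] [Module A M] [Module R M] (D : Derivation R A M) (y : σ → A)
    (F : MvPolynomial σ R) : D (aeval y F) = ∑ a, aeval y (pderiv a F) • D (y a) := by
  induction F using MvPolynomial.induction_on with
  | C c => simp [algHom_C]
  | add F G hF hG => simp [hF, hG, add_smul, Finset.sum_add_distrib]
  | mul_X F b hF =>
    simp only [map_mul, aeval_X, D.leibniz, hF, Derivation.leibniz, pderiv_X, smul_eq_mul, map_add,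
      add_smul, Finset.sum_add_distrib, Finset.smul_sum, smul_smul, Pi.single_apply]
    simp

variable {σ k : Type*} [Field k] (I : Ideal (MvPolynomial σ k))

/-- The generic point of the affine variety defined by the ideal `I`: the tuple of the coordinate
functions in its ring of rational functions, which is a field when `I` is prime. -/
def genericZero (a : σ) : FractionRing (MvPolynomial σ k ⧸ I) :=
  algebraMap (MvPolynomial σ k ⧸ I) _ (Ideal.Quotient.mk I (X a))

variable {I}

lemma aeval_genericZero (F : MvPolynomial σ k) :
    aeval (genericZero I) F = algebraMap (MvPolynomial σ k ⧸ I) _ (Ideal.Quotient.mk I F) := by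
  have h : aeval (genericZero I) = (IsScalarTower.toAlgHom k (MvPolynomial σ k ⧸ I)
      (FractionRing (MvPolynomial σ k ⧸ I))).comp (Ideal.Quotient.mkₐ k I) :=
    algHom_ext fun a => aeval_X ..
  exact AlgHom.congr_fun h F

lemma aeval_genericZero_eq_zero_iff [I.IsPrime] {F : MvPolynomial σ k} :
    aeval (genericZero I) F = 0 ↔ F ∈ I := by
  rw [aeval_genericZero, FaithfulSMul.algebraMap_eq_zero_iff, Ideal.Quotient.eq_zero_iff_mem]

lemma exists_aeval_genericZero_eq_mul [I.IsPrime] {ι : Type*} [Finite ι]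
    (z : ι → FractionRing (MvPolynomial σ k ⧸ I)) :
    ∃ w ∉ I, ∃ U : ι → MvPolynomial σ k,
      ∀ i, aeval (genericZero I) (U i) = aeval (genericZero I) w * z i := by
  obtain ⟨d, hd⟩ := IsLocalization.exist_integer_multiples_of_finite
    (nonZeroDivisors (MvPolynomial σ k ⧸ I)) z
  choose u hu using hd
  obtain ⟨w, hw⟩ := Ideal.Quotient.mk_surjective (d : MvPolynomial σ k ⧸ I)
  choose U hU using fun i => Ideal.Quotient.mk_surjective (u i)
  refine ⟨w, fun hwI => nonZeroDivisors.ne_zero d.2 ?_, U, fun i => ?_⟩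
  · rw [← hw, Ideal.Quotient.eq_zero_iff_mem.2 hwI]
  · rw [aeval_genericZero, aeval_genericZero, hU, hw, hu, Algebra.smul_def]

end GenericZeros

section IntegralVarieties

variable {N : ℕ} {T : Set (Fin N → ℂ)}

lemma exists_isTangentField_of_derivation [(vanishingIdeal ℂ T).IsPrime]
    (D : Derivation ℂ (FractionRing (MvPolynomial (Fin N) ℂ ⧸ vanishingIdeal ℂ T))
      (FractionRing (MvPolynomial (Fin N) ℂ ⧸ vanishingIdeal ℂ T))) :
    ∃ w ∉ vanishingIdeal ℂ T, ∃ U, IsTangentField T U ∧ ∀ F,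
      aeval (genericZero (vanishingIdeal ℂ T)) (∑ a, U a * pderiv a F) =
        aeval (genericZero (vanishingIdeal ℂ T)) w *
          D (aeval (genericZero (vanishingIdeal ℂ T)) F) := by
  obtain ⟨w, hw, U, hU⟩ := exists_aeval_genericZero_eq_mul
    fun a => D (genericZero (vanishingIdeal ℂ T) a)
  have hUD (F) : aeval (genericZero (vanishingIdeal ℂ T)) (∑ a, U a * pderiv a F) =
      aeval (genericZero (vanishingIdeal ℂ T)) w *
        D (aeval (genericZero (vanishingIdeal ℂ T)) F) := by
    simp only [derivation_aeval, map_sum, map_mul, hU, smul_eq_mul, Finset.mul_sum, mul_assoc,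
      mul_comm (D _)]
  refine ⟨w, hw, U, fun x hx => mem_tanSpan_iff.2 fun F hF => ?_, hUD⟩
  have hmem : ∑ a, U a * pderiv a F ∈ vanishingIdeal ℂ T := by
    rw [← aeval_genericZero_eq_zero_iff, hUD, aeval_genericZero_eq_zero_iff.2 hF, map_zero,
      mul_zero]
  simpa [differential_apply] using mem_vanishingIdeal_iff_eval.1 hmem x hx

lemma exists_eval_eq_mul_of_differential_mul_eq (hT : IrrAlg T) {f h g : MvPolynomial (Fin N) ℂ}
    (hh : h ∉ vanishingIdeal ℂ T) (hg : g ∉ vanishingIdeal ℂ T)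
    (hfh : ∀ x ∈ T, eval x g ≠ 0 → ∀ v ∈ tanSpan T x,
      differential x f v * eval x h = eval x f * differential x h v) :
    ∃ c : ℂ, ∀ x ∈ T, eval x f = c * eval x h := by
  have hprime := hT.isPrime_vanishingIdeal
  let K := FractionRing (MvPolynomial (Fin N) ℂ ⧸ vanishingIdeal ℂ T)
  let ev : MvPolynomial (Fin N) ℂ →ₐ[ℂ] K := aeval (genericZero (vanishingIdeal ℂ T))
  have hev {F} : ev F = 0 ↔ F ∈ vanishingIdeal ℂ T := aeval_genericZero_eq_zero_iff
  have hconst (D : Derivation ℂ K K) : D (ev f / ev h) = 0 := by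
    obtain ⟨w, hw, U, hUT, hUD⟩ := exists_isTangentField_of_derivation D
    have hmem : ((∑ a, U a * pderiv a f) * h - f * ∑ a, U a * pderiv a h) * g ∈
        vanishingIdeal ℂ T := by
      refine mem_vanishingIdeal_iff_eval.2 fun x hx => ?_
      by_cases hgx : eval x g = 0
      · simp [hgx]
      · have := hfh x hx hgx _ (hUT x hx)
        simp only [differential_apply] at this
        simp [this]
    have hD : ev w * (ev h * D (ev f) - ev f * D (ev h)) = 0 := by
      have := hev.2 ((hprime.mem_or_mem hmem).resolve_right hg)
      simp only [map_sub, map_mul] at this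
      rw [show ev _ = _ from hUD f, show ev _ = _ from hUD h] at this
      rw [← this]
      ring
    rw [D.leibniz_div, smul_eq_mul, smul_eq_mul, smul_eq_mul,
      (mul_eq_zero.1 hD).resolve_left (mt hev.1 hw), mul_zero]
  have : CharZero K := charZero_of_injective_algebraMap (algebraMap ℂ K).injective
  obtain ⟨c, hc⟩ := exists_algebraMap_eq_of_forall_derivation_eq_zero hconst
  refine ⟨c, fun x hx => ?_⟩
  have hmem : f - C c * h ∈ vanishingIdeal ℂ T := by
    rw [← hev, map_sub, map_mul, ← algebraMap_eq, AlgHom.commutes, hc,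
      div_mul_cancel₀ _ (mt hev.1 hh), sub_self]
  simpa [sub_eq_zero] using mem_vanishingIdeal_iff_eval.1 hmem x hx

lemma subset_sup_span_singleton_of_tanSpan_le (hT : IrrAlg T) {L : Submodule ℂ (Fin N → ℂ)}
    {p : Fin N → ℂ} (hp : p ∈ T) (hpL : p ∉ L) {g : MvPolynomial (Fin N) ℂ}
    (hg : g ∉ vanishingIdeal ℂ T)
    (htan : ∀ x ∈ T, x ∉ L → eval x g ≠ 0 → tanSpan T x ≤ L ⊔ Submodule.span ℂ {x}) :
    T ⊆ (L ⊔ Submodule.span ℂ {p} : Submodule ℂ (Fin N → ℂ)) := by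
  obtain ⟨h, hhp, hhL⟩ := Submodule.exists_le_ker_of_notMem hpL
  have hh : linearPoly h ∉ vanishingIdeal ℂ T :=
    notMem_vanishingIdeal_iff_eval.2 ⟨p, hp, by rwa [eval_linearPoly]⟩
  have hratio : ∀ φ ∈ L.dualAnnihilator, ∃ c : ℂ, ∀ x ∈ T, φ x = c * h x := fun φ hφ => by
    simp only [← eval_linearPoly]
    refine exists_eval_eq_mul_of_differential_mul_eq hT hh
      (hT.isPrime_vanishingIdeal.mul_notMem hh hg) fun x hx hgx v hv => ?_
    rw [map_mul, eval_linearPoly] at hgx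
    obtain ⟨l, hl, y, hy, rfl⟩ := Submodule.mem_sup.1 (htan x hx
      (fun hxL => left_ne_zero_of_mul hgx (hhL hxL)) (right_ne_zero_of_mul hgx) hv)
    obtain ⟨c, rfl⟩ := Submodule.mem_span_singleton.1 hy
    simp only [differential_linearPoly, eval_linearPoly, map_add, map_smul, smul_eq_mul,
      (Submodule.mem_dualAnnihilator φ).1 hφ l hl, LinearMap.mem_ker.1 (hhL hl)]
    ring
  intro x hx
  have hL : x - (h x / h p) • p ∈ L := by
    rw [← Subspace.forall_mem_dualAnnihilator_apply_eq_zero_iff]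
    intro φ hφ
    obtain ⟨c, hc⟩ := hratio φ hφ
    rw [map_sub, map_smul, hc x hx, hc p hp, smul_eq_mul]
    field_simp
    ring
  exact Submodule.mem_sup.2 ⟨_, hL, _, Submodule.mem_span_singleton.2 ⟨_, rfl⟩, sub_add_cancel _ _⟩

end IntegralVarieties

section LinearAlgebra

variable {k V : Type*} [Field k] [AddCommGroup V] [Module k V]

lemma exists_le_sup_eq_top_inf_eq (A B : Submodule k V) :
    ∃ A', A ≤ A' ∧ A' ⊔ B = ⊤ ∧ A' ⊓ B = A ⊓ B := by
  obtain ⟨M, hM⟩ := exists_isCompl (A ⊔ B)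
  refine ⟨A ⊔ M, le_sup_left, by rw [sup_right_comm, hM.sup_eq_top], ?_⟩
  refine le_antisymm (le_inf ?_ inf_le_right) (inf_le_inf_right B le_sup_left)
  calc (A ⊔ M) ⊓ B ≤ (A ⊔ M) ⊓ (A ⊔ B) := inf_le_inf_left _ le_sup_right
    _ = A ⊔ M ⊓ (A ⊔ B) := sup_inf_assoc_of_le _ le_sup_left
    _ = A := by rw [hM.symm.inf_eq_bot, sup_bot_eq]

variable [FiniteDimensional k V]

lemma finrank_inf_sup_span_singleton {W L : Submodule k V} {x : V} (hxW : x ∈ W) (hxL : x ∉ L) :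
    Module.finrank k (W ⊓ (L ⊔ Submodule.span k {x}) : Submodule k V) =
      Module.finrank k (W ⊓ L : Submodule k V) + 1 := by
  rw [inf_comm, sup_comm, sup_inf_assoc_of_le _ ((Submodule.span_singleton_le_iff_mem _ _).2 hxW),
    sup_comm, inf_comm, Submodule.finrank_sup_span_singleton (mt And.right hxL)]

lemma sup_span_singleton_eq_of_finrank_le {A B : Submodule k V} (hAB : A ≤ B) {x : V} (hxB : x ∈ B)
    (hxA : x ∉ A) (h : Module.finrank k B ≤ Module.finrank k A + 1) :
    A ⊔ Submodule.span k {x} = B :=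
  Submodule.eq_of_le_of_finrank_le
    (sup_le hAB ((Submodule.span_singleton_le_iff_mem _ _).2 hxB))
    (by rwa [Submodule.finrank_sup_span_singleton hxA])

end LinearAlgebra

section TangentialFibres

variable {N r : ℕ} {Y T : Set (Fin N → ℂ)} {p x : Fin N → ℂ} {L Λ : Submodule ℂ (Fin N → ℂ)}

lemma tanSpan_le_of_subset (hT : T ⊆ L) : tanSpan T x ≤ L := fun v hv => by
  rw [← Subspace.forall_mem_dualAnnihilator_apply_eq_zero_iff]
  intro φ hφ
  rw [← differential_linearPoly φ x]
  refine mem_tanSpan_iff.1 hv _ (mem_vanishingIdeal_iff_eval.2 fun y hy => ?_)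
  rw [eval_linearPoly]
  exact (Submodule.mem_dualAnnihilator φ).1 hφ y (hT hy)

lemma tanSpan_le_inf_of_subset_inter (hT : T ⊆ Y ∩ L) : tanSpan T x ≤ tanSpan Y x ⊓ L :=
  le_inf (tanSpan_mono fun _ hy => (hT hy).1) (tanSpan_le_of_subset fun _ hy => (hT hy).2)

lemma exists_finrank_inf_tanSpan_le
    (hr : ∀ p ∈ Y, p ≠ 0 → Module.finrank ℂ (tanSpan Y p) = r) (hp : p ∈ Y) (hp0 : p ≠ 0) :
    ∃ g, eval p g ≠ 0 ∧ ∀ x ∈ Y, x ≠ 0 → eval x g ≠ 0 →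
      Module.finrank ℂ (tanSpan Y x ⊓ Λ : Submodule ℂ (Fin N → ℂ)) ≤
        Module.finrank ℂ (tanSpan Y p ⊓ Λ : Submodule ℂ (Fin N → ℂ)) := by
  obtain ⟨g, hgp, hg⟩ := exists_finrank_sup_iSup_tanSpan_le hr Λ
    (q := fun _ : Fin 1 => p) fun _ => ⟨hp, hp0⟩
  refine ⟨rename Prod.snd g, by rwa [eval_rename], fun x hx hx0 hgx => ?_⟩
  have hle := hg (fun _ => x) (fun _ => hx) (by rwa [eval_rename] at hgx)
  rw [iSup_const, iSup_const] at hle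
  have hsum := Submodule.finrank_sup_add_finrank_inf_eq Λ (tanSpan Y p)
  have hsum' := Submodule.finrank_sup_add_finrank_inf_eq Λ (tanSpan Y x)
  rw [hr _ hp hp0] at hsum
  rw [hr _ hx hx0] at hsum'
  rw [inf_comm, inf_comm (tanSpan Y p)]
  omega

lemma pdim_compThrough_inter_le (hY : IsAlg Y) {d : ℕ}
    (hd : Module.finrank ℂ (tanSpan Y p ⊓ Λ : Submodule ℂ (Fin N → ℂ)) ≤ d + 1) :
    pdim (compThrough (Y ∩ Λ) p) ≤ nn d := by
  refine pdim_le fun T hT _ _ hsub => ?_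
  obtain ⟨T', hT', hpT', hTT'⟩ :=
    hT.exists_isComponent_of_subset_compThrough (hY.inter (isAlg_submodule Λ)) hsub
  calc affDim T ≤ affDim T' := affDim_mono hT hT'.1 hTT'
    _ ≤ Module.finrank ℂ (tanSpan T' p) := affDim_le_finrank_tanSpan hT'.1 hpT'
    _ ≤ Module.finrank ℂ (tanSpan Y p ⊓ Λ : Submodule ℂ (Fin N → ℂ)) :=
      Submodule.finrank_mono (tanSpan_le_inf_of_subset_inter hT'.2.1)
    _ ≤ d + 1 := hd

-- The component through `p` is found on a section of `Y` by a linear space `Λ' ⊇ L ⊔ ⟨p⟩`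
-- transverse to the tangent space at `p`; its tangent spaces show that it lies in `L ⊔ ⟨p⟩`.
lemma nn_le_pdim_compThrough_inter_sup_span_singleton (hY : IrrAlg Y) (hc : IsCone Y)
    (hr : ∀ p ∈ Y, p ≠ 0 → Module.finrank ℂ (tanSpan Y p) = r) (hdim : r ≤ affDim Y)
    (hp : p ∈ Y) (hpL : p ∉ L)
    (hmin : ∀ x ∈ Y, x ≠ 0 → Module.finrank ℂ (tanSpan Y p ⊓ L : Submodule ℂ (Fin N → ℂ)) ≤
      Module.finrank ℂ (tanSpan Y x ⊓ L : Submodule ℂ (Fin N → ℂ))) :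
    nn (Module.finrank ℂ (tanSpan Y p ⊓ L : Submodule ℂ (Fin N → ℂ))) ≤
      pdim (compThrough (Y ∩ (L ⊔ Submodule.span ℂ {p} : Submodule ℂ (Fin N → ℂ))) p) := by
  have hne {x} (hx : x ∉ L) : x ≠ 0 := fun h => hx (h ▸ L.zero_mem)
  obtain ⟨Λ', hΛ', htop, hinf⟩ :=
    exists_le_sup_eq_top_inf_eq (L ⊔ Submodule.span ℂ {p}) (tanSpan Y p)
  have hrank : Module.finrank ℂ (tanSpan Y p ⊓ Λ' : Submodule ℂ (Fin N → ℂ)) =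
      Module.finrank ℂ (tanSpan Y p ⊓ L : Submodule ℂ (Fin N → ℂ)) + 1 := by
    rw [inf_comm, hinf, inf_comm, finrank_inf_sup_span_singleton (hc.self_mem_tanSpan hp) hpL]
  obtain ⟨T, hT, hTc, hTsub, hpT, hTdim⟩ := exists_irrAlg_isCone_subset_inter hY hc Λ' hp
    (hΛ' (Submodule.mem_sup_right (Submodule.mem_span_singleton_self p)))
  obtain ⟨g, hgp, hg⟩ := exists_finrank_inf_tanSpan_le (Λ := Λ') hr hp (hne hpL)
  have hTL : T ⊆ (L ⊔ Submodule.span ℂ {p} : Submodule ℂ (Fin N → ℂ)) := by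
    refine subset_sup_span_singleton_of_tanSpan_le hT hpT hpL
      (notMem_vanishingIdeal_iff_eval.2 ⟨p, hpT, hgp⟩) fun x hx hxL hgx => ?_
    obtain ⟨hxY, hxΛ'⟩ := hTsub hx
    have hle := hg x hxY (hne hxL) hgx
    rw [hrank] at hle
    calc tanSpan T x ≤ tanSpan Y x ⊓ Λ' := tanSpan_le_inf_of_subset_inter hTsub
      _ = (tanSpan Y x ⊓ L) ⊔ Submodule.span ℂ {x} :=
        (sup_span_singleton_eq_of_finrank_le (inf_le_inf_left _ (le_sup_left.trans hΛ'))
          ⟨hc.self_mem_tanSpan hxY, hxΛ'⟩ (fun h => hxL h.2)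
          (hle.trans (Nat.add_le_add_right (hmin x hxY (hne hxL)) 1))).symm
      _ ≤ L ⊔ Submodule.span ℂ {x} := sup_le_sup_right inf_le_right _
  refine nn_le_pdim hT hTc (IrrAlg.subset_compThrough (hY.1.inter (isAlg_submodule _)) hT
    (fun x hx => ⟨(hTsub hx).1, hTL hx⟩) hpT) ?_
  have hsum := Submodule.finrank_sup_add_finrank_inf_eq Λ' (tanSpan Y p)
  rw [htop, finrank_top, Module.finrank_fin_fun, inf_comm, hrank, hr p hp (hne hpL)] at hsum
  omega

lemma pdim_compThrough_inter_sup_span_singleton (hY : IrrAlg Y) (hc : IsCone Y)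
    (hr : ∀ p ∈ Y, p ≠ 0 → Module.finrank ℂ (tanSpan Y p) = r) (hdim : r ≤ affDim Y)
    (hp : p ∈ Y) (hpL : p ∉ L)
    (hmin : ∀ x ∈ Y, x ≠ 0 → Module.finrank ℂ (tanSpan Y p ⊓ L : Submodule ℂ (Fin N → ℂ)) ≤
      Module.finrank ℂ (tanSpan Y x ⊓ L : Submodule ℂ (Fin N → ℂ))) :
    pdim (compThrough (Y ∩ (L ⊔ Submodule.span ℂ {p} : Submodule ℂ (Fin N → ℂ))) p) =
      nn (Module.finrank ℂ (tanSpan Y p ⊓ L : Submodule ℂ (Fin N → ℂ))) :=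
  le_antisymm
    (pdim_compThrough_inter_le hY.1
      (finrank_inf_sup_span_singleton (hc.self_mem_tanSpan hp) hpL).le)
    (nn_le_pdim_compThrough_inter_sup_span_singleton hY hc hr hdim hp hpL hmin)

lemma iSup_fin_succ {α : Type*} [CompleteLattice α] {j : ℕ} (f : Fin (j + 1) → α) :
    ⨆ i, f i = f 0 ⊔ ⨆ i : Fin j, f i.succ :=
  le_antisymm (iSup_le (Fin.cases le_sup_left fun i =>
      le_sup_of_le_right (le_iSup (fun i : Fin j => f i.succ) i)))
    (sup_le (le_iSup f 0) (iSup_le fun i => le_iSup f i.succ))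

/-- The intersection of the tangent space of `Y` at the first point of a tuple with the span of its
tangent spaces at the other points. For a general tuple, `p 0` and this space span the embedded
tangent space at `p 0` of the projection contact locus. -/
def contactSpace {j : ℕ} (Y : Set (Fin N → ℂ)) (p : Fin (j + 1) → Fin N → ℂ) :
    Submodule ℂ (Fin N → ℂ) :=
  tanSpan Y (p 0) ⊓ ⨆ i : Fin j, tanSpan Y (p i.succ)

lemma pdim_psiLocus {j : ℕ} (hY : IrrAlg Y) (hc : IsCone Y)
    (hr : ∀ p ∈ Y, p ≠ 0 → Module.finrank ℂ (tanSpan Y p) = r) (hdim : r ≤ affDim Y)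
    {p : Fin (j + 1) → Fin N → ℂ} (hp : ∀ i, p i ∈ Y ∧ p i ≠ 0)
    (hp0 : p 0 ∉ ⨆ i : Fin j, tanSpan Y (p i.succ))
    (hmax : ∀ q : Fin (j + 1) → Fin N → ℂ, (∀ i, q i ∈ Y ∧ q i ≠ 0) →
      Module.finrank ℂ (⨆ i, tanSpan Y (q i) : Submodule ℂ (Fin N → ℂ)) ≤
        Module.finrank ℂ (⨆ i, tanSpan Y (p i) : Submodule ℂ (Fin N → ℂ))) :
    pdim (PsiLocus Y p) = nn (Module.finrank ℂ (contactSpace Y p)) := by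
  have hspan : Submodule.span ℂ ((⋃ i : Fin j, embTangent Y (p i.succ)) ∪ {p 0}) =
      (⨆ i : Fin j, tanSpan Y (p i.succ)) ⊔ Submodule.span ℂ {p 0} := by
    rw [Submodule.span_union, Submodule.span_iUnion]
    rfl
  rw [PsiLocus, hspan]
  refine pdim_compThrough_inter_sup_span_singleton hY hc hr hdim (hp 0).1 hp0 fun x hx hx0 => ?_
  have hle := hmax (Fin.cons x fun i => p i.succ) (Fin.cases ⟨hx, hx0⟩ fun i => hp i.succ)
  rw [iSup_fin_succ, iSup_fin_succ] at hle
  change Module.finrank ℂ (tanSpan Y x ⊔ ⨆ i : Fin j, tanSpan Y (p i.succ) :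
    Submodule ℂ (Fin N → ℂ)) ≤ _ at hle
  have hsum := Submodule.finrank_sup_add_finrank_inf_eq (tanSpan Y (p 0))
    (⨆ i : Fin j, tanSpan Y (p i.succ))
  have hsum' := Submodule.finrank_sup_add_finrank_inf_eq (tanSpan Y x)
    (⨆ i : Fin j, tanSpan Y (p i.succ))
  rw [hr _ (hp 0).1 (hp 0).2] at hsum
  rw [hr _ hx hx0] at hsum'
  omega

end TangentialFibres

section ConesOverValuationRings

variable {N r : ℕ} {Y : Set (Fin N → ℂ)}

lemma exists_isTangentProjector_aeval_ne_zero {κ : Type*} [Field κ] [Algebra ℂ κ] (hY : IsAlg Y)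
    (hr : ∀ p ∈ Y, p ≠ 0 → Module.finrank ℂ (tanSpan Y p) = r) {y : Fin N → κ}
    (hy : ∀ f ∈ vanishingIdeal ℂ Y, aeval y f = 0) (hy0 : y ≠ 0) :
    ∃ g S, IsTangentProjector Y g S ∧ aeval y g ≠ 0 := by
  by_contra! h
  let J : Ideal (MvPolynomial (Fin N) ℂ) :=
    vanishingIdeal ℂ Y ⊔ Ideal.span {g | ∃ S, IsTangentProjector Y g S}
  have hJ : J ≤ RingHom.ker (aeval y : MvPolynomial (Fin N) ℂ →ₐ[ℂ] κ) :=
    sup_le hy (Ideal.span_le.2 fun g ⟨S, hS⟩ => h g S hS)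
  have hzero (x) (hx : x ∈ zeroLocus ℂ J) : x = 0 := by
    rw [mem_zeroLocus_iff_eval] at hx
    have hxY : x ∈ Y := by
      rw [← hY.zeroLocus_vanishingIdeal, mem_zeroLocus_iff_eval]
      exact fun f hf => hx f (Ideal.mem_sup_left hf)
    by_contra hx0
    obtain ⟨g, S, hS, hg⟩ := exists_isTangentProjector hr hxY hx0
    exact hg (hx g (Ideal.mem_sup_right (Ideal.subset_span ⟨S, hS⟩)))
  refine hy0 (_root_.funext fun a => ?_)
  have hX : X a ∈ J.radical := by
    rw [← vanishingIdeal_zeroLocus_eq_radical (K := ℂ), mem_vanishingIdeal_iff_eval]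
    exact fun x hx => by simp [hzero x hx]
  have hprime : (RingHom.ker (aeval y : MvPolynomial (Fin N) ℂ →ₐ[ℂ] κ)).IsPrime :=
    RingHom.ker_isPrime _
  simpa using hprime.radical_le_iff.2 hJ hX

lemma sum_mul_eq_zero_of_forall_isTangentField {κ : Type*} [Field κ] [Algebra ℂ κ] (hY : IsAlg Y)
    (hr : ∀ p ∈ Y, p ≠ 0 → Module.finrank ℂ (tanSpan Y p) = r) {y : Fin N → κ}
    (hy : ∀ f ∈ vanishingIdeal ℂ Y, aeval y f = 0) (hy0 : y ≠ 0) {h v : Fin N → κ}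
    (hh : ∀ s, IsTangentField Y s → ∑ a, h a * aeval y (s a) = 0)
    (hv : ∀ f ∈ vanishingIdeal ℂ Y, ∑ a, v a * aeval y (pderiv a f) = 0) :
    ∑ a, h a * v a = 0 := by
  obtain ⟨g, S, hS, hg⟩ := exists_isTangentProjector_aeval_ne_zero hY hr hy hy0
  refine (mul_eq_zero.1 ?_).resolve_left hg
  have hSv (a : Fin N) : aeval y g * v a = ∑ b, aeval y (S a b) * v b :=
    (congrFun (hS.mulVec_eq_smul hv) a).symm
  calc aeval y g * ∑ a, h a * v a
      = ∑ a, h a * ∑ b, aeval y (S a b) * v b := by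
        simp only [Finset.mul_sum, ← hSv, mul_left_comm]
    _ = ∑ b, v b * ∑ a, h a * aeval y (S a b) := by
        simp only [Finset.mul_sum]
        rw [Finset.sum_comm]
        simp only [mul_comm, mul_left_comm]
    _ = 0 := Finset.sum_eq_zero fun b _ => by
        rw [show ∑ a, h a * aeval y (S a b) = 0 from hh _ (hS.isTangentField b), mul_zero]

lemma sum_mul_mem_maximalIdeal {R : Type*} [CommRing R] [IsDomain R] [IsLocalRing R] [Algebra ℂ R]
    (hY : IsAlg Y) (hr : ∀ p ∈ Y, p ≠ 0 → Module.finrank ℂ (tanSpan Y p) = r) {y z h : Fin N → R}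
    {t : R} (ht : t ∈ IsLocalRing.maximalIdeal R) (ht0 : t ≠ 0)
    (hy : ∀ f ∈ vanishingIdeal ℂ Y, aeval y f = 0)
    (hyz : ∀ f ∈ vanishingIdeal ℂ Y, aeval (y + t • z) f = 0)
    {b : Fin N} (hyb : y b ∉ IsLocalRing.maximalIdeal R)
    (hh : ∀ s, IsTangentField Y s → ∑ a, h a * aeval y (s a) = 0) :
    ∑ a, h a * z a ∈ IsLocalRing.maximalIdeal R := by
  have hz (f) (hf : f ∈ vanishingIdeal ℂ Y) :
      ∑ a, z a * aeval y (pderiv a f) ∈ IsLocalRing.maximalIdeal R := by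
    have hsq := aeval_add_sub_sub_mem_sq (Ideal.span {t}) y (y := t • z)
      (fun a => Ideal.mul_mem_right _ _ (Ideal.mem_span_singleton_self t)) f
    rw [hyz f hf, hy f hf, Ideal.span_singleton_pow, Ideal.mem_span_singleton] at hsq
    obtain ⟨e, he⟩ := hsq
    have hte : t * (∑ a, z a * aeval y (pderiv a f)) = t * (t * -e) := by
      simp only [Pi.smul_apply, smul_eq_mul, mul_assoc, ← Finset.mul_sum] at he
      linear_combination -he
    rw [mul_left_cancel₀ ht0 hte]
    exact Ideal.mul_mem_right _ _ ht
  let res := IsLocalRing.residue R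
  have hres (f : MvPolynomial (Fin N) ℂ) : aeval (fun a => res (y a)) f = res (aeval y f) :=
    aeval_algebraMap_apply (IsLocalRing.ResidueField R) y f
  rw [← IsLocalRing.residue_eq_zero_iff, map_sum]
  simp only [map_mul]
  refine sum_mul_eq_zero_of_forall_isTangentField hY hr (y := fun a => res (y a))
    (fun f hf => ?_) (fun h0 => ?_) (fun s hs => ?_) (fun f hf => ?_)
  · rw [hres, hy f hf, map_zero]
  · exact hyb ((IsLocalRing.residue_eq_zero_iff _).1 (congrFun h0 b))
  · simp only [hres, ← map_mul, ← map_sum, res, hh s hs, map_zero]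
  · have hsum := (IsLocalRing.residue_eq_zero_iff _).2 (hz f hf)
    simpa only [map_sum, map_mul, hres] using hsum

lemma sum_mul_aeval_smul_eq_zero {A : Type*} [CommRing A] [Algebra ℂ A]
    (hY : IsCone Y) {x h : Fin N → A}
    (hh : ∀ s, IsTangentField Y s → ∑ a, h a * aeval x (s a) = 0) {s} (hs : IsTangentField Y s)
    (l : A) : ∑ a, h a * aeval (l • x) (s a) = 0 := by
  obtain ⟨n, hn⟩ := Finite.exists_le fun a => (s a).totalDegree
  calc ∑ a, h a * aeval (l • x) (s a)
      = ∑ a, ∑ d ∈ Finset.range (n + 1), l ^ d * (h a * aeval x (homogeneousComponent d (s a))) :=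
        Finset.sum_congr rfl fun a _ => by
          rw [aeval_smul_eq_sum (Nat.lt_succ_of_le (hn a)), Finset.mul_sum]
          exact Finset.sum_congr rfl fun d _ => mul_left_comm _ _ _
    _ = ∑ d ∈ Finset.range (n + 1), l ^ d * ∑ a, h a * aeval x (homogeneousComponent d (s a)) := by
        rw [Finset.sum_comm]
        simp only [Finset.mul_sum]
    _ = 0 := Finset.sum_eq_zero fun d _ => by
        rw [hh _ (hs.homogeneousComponent hY d), mul_zero]

-- Rescaling by a coordinate of `x` of maximal value reduces to a primitive vector of the cone over
-- the valuation ring, whose reduction is a nonzero vector of the cone over the residue field.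
lemma sum_mul_mem_maximalIdeal_of_notMem {K : Type*} [Field K] [Algebra ℂ K]
    (O : ValuationSubring K) [Algebra ℂ O] [IsScalarTower ℂ O K] (hY : IsAlg Y) (hc : IsCone Y)
    (hr : ∀ p ∈ Y, p ≠ 0 → Module.finrank ℂ (tanSpan Y p) = r) {x x' : Fin N → K} {h z : Fin N → O}
    (hx : ∀ f ∈ vanishingIdeal ℂ Y, aeval x f = 0) (hx' : ∀ f ∈ vanishingIdeal ℂ Y, aeval x' f = 0)
    (hxz : ∀ a, x a + x' a = z a) {b : Fin N} (hxb : x b ∉ O)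
    (hh : ∀ s, IsTangentField Y s → ∑ a, (h a : K) * aeval x (s a) = 0) :
    ∑ a, h a * z a ∈ IsLocalRing.maximalIdeal O := by
  have : Nonempty (Fin N) := ⟨b⟩
  obtain ⟨c, hcmax⟩ := Finite.exists_max fun a => O.valuation (x a)
  have hxc : 1 < O.valuation (x c) :=
    (not_le.1 (mt (O.valuation_le_one_iff _).1 hxb)).trans_le (hcmax b)
  have hxc0 : x c ≠ 0 := fun h0 => by simp [h0] at hxc
  have hinv : O.valuation (x c)⁻¹ < 1 := by
    rw [map_inv₀]
    exact inv_lt_one_of_one_lt₀ hxc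
  have hmem (a : Fin N) : -((x c)⁻¹ * x a) ∈ O := by
    rw [← O.valuation_le_one_iff, Valuation.map_neg, map_mul, map_inv₀]
    exact inv_mul_le_one_of_le₀ (hcmax a) zero_le
  let t : O := ⟨(x c)⁻¹, (O.valuation_le_one_iff _).1 hinv.le⟩
  let y : Fin N → O := fun a => ⟨-((x c)⁻¹ * x a), hmem a⟩
  have hcoe (u : Fin N → O) (f : MvPolynomial (Fin N) ℂ) :
      (aeval u f : K) = aeval (fun a => (u a : K)) f := (aeval_algebraMap_apply K u f).symm
  have hy : (fun a => (y a : K)) = (-(x c)⁻¹) • x := by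
    ext a
    simp [y]
  have hyz : (fun a => ((y + t • z) a : K)) = (x c)⁻¹ • x' := by
    ext a
    simp [y, t, ← hxz]
    ring
  refine sum_mul_mem_maximalIdeal hY hr (y := y) (t := t) (b := c)
    ((O.valuation_lt_one_iff _).2 hinv) (fun h0 => inv_ne_zero hxc0 (congrArg Subtype.val h0))
    (fun f hf => Subtype.ext ?_) (fun f hf => Subtype.ext ?_) (fun hyc => ?_)
    (fun s hs => Subtype.ext ?_)
  · rw [hcoe, hy]
    exact hc.aeval_smul_eq_zero hx _ f hf
  · rw [hcoe, hyz]
    exact hc.aeval_smul_eq_zero hx' _ f hf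
  · have hyc1 : y c = -1 := Subtype.ext (by simp [y, hxc0])
    rw [hyc1] at hyc
    exact (IsLocalRing.notMem_maximalIdeal.2 isUnit_one.neg) hyc
  · simp only [AddSubmonoidClass.coe_finsetSum, MulMemClass.coe_mul, hcoe, hy]
    exact sum_mul_aeval_smul_eq_zero hc hh hs _

lemma derivation_apply_eq_zero_of_add {K : Type*} [Field K] [Algebra ℂ K] (hY : IsAlg Y)
    (hc : IsCone Y) (hr : ∀ p ∈ Y, p ≠ 0 → Module.finrank ℂ (tanSpan Y p) = r)
    (D : Derivation ℂ K K) {x x' h : Fin N → K} (hx : ∀ f ∈ vanishingIdeal ℂ Y, aeval x f = 0)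
    (hx' : ∀ f ∈ vanishingIdeal ℂ Y, aeval x' f = 0) (hDx : ∀ a, D (x a + x' a) = 0)
    (hDh : ∀ a, D (h a) = 0) (hh : ∀ s, IsTangentField Y s → ∑ a, h a * aeval x (s a) = 0)
    (hne : ∑ a, h a * (x a + x' a) ≠ 0) (b : Fin N) : D (x b) = 0 := by
  by_contra hb
  have : CharZero K := charZero_of_injective_algebraMap (algebraMap ℂ K).injective
  obtain ⟨O, hO, hbO⟩ := exists_valuationSubring_of_derivation_ne_zero D hb
  let : Algebra ℂ O := ((algebraMap ℂ K).codRestrict O.toSubring fun c =>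
    hO _ (D.map_algebraMap c)).toAlgebra
  have : IsScalarTower ℂ O K := IsScalarTower.of_algebraMap_eq fun _ => rfl
  have hmem := sum_mul_mem_maximalIdeal_of_notMem O hY hc hr (h := fun a => ⟨h a, hO _ (hDh a)⟩)
    (z := fun a => ⟨x a + x' a, hO _ (hDx a)⟩) hx hx' (fun _ => rfl) hbO hh
  have hD : D (∑ a, h a * (x a + x' a)) = 0 := by simp [-map_add, hDh, hDx]
  have hinv : (∑ a, h a * (x a + x' a))⁻¹ ∈ O := hO _ (by rw [D.leibniz_inv, hD, smul_zero])
  refine hmem (IsUnit.of_mul_eq_one ⟨_, hinv⟩ (Subtype.ext ?_))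
  simpa using mul_inv_cancel₀ hne

end ConesOverValuationRings

section DerivationsOfFunctionFields

variable {σ k : Type*} [Field k] {I : Ideal (MvPolynomial σ k)}

lemma exists_derivation_aeval_genericZero_eq [I.IsPrime] {V : σ → MvPolynomial σ k}
    (hV : ∀ f ∈ I, mkDerivation k V f ∈ I) :
    ∃ D : Derivation k (FractionRing (MvPolynomial σ k ⧸ I)) (FractionRing (MvPolynomial σ k ⧸ I)),
      ∀ f, D (aeval (genericZero I) f) = aeval (genericZero I) (mkDerivation k V f) := by
  let B := MvPolynomial σ k ⧸ I
  have hker (f : MvPolynomial σ k) (hf : Ideal.Quotient.mkₐ k I f = 0) :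
      Ideal.Quotient.mkₐ k I (mkDerivation k V f) = 0 :=
    Ideal.Quotient.eq_zero_iff_mem.2 (hV f (Ideal.Quotient.eq_zero_iff_mem.1 hf))
  let D₀ : Derivation k B B :=
    Derivation.liftOfSurjective (Ideal.Quotient.mkₐ_surjective k I) hker
  have : Algebra.FormallyEtale B (FractionRing B) :=
    Algebra.FormallyEtale.of_isLocalization (nonZeroDivisors B)
  obtain ⟨D, hD⟩ :=
    exists_derivation_extending ((Algebra.linearMap B (FractionRing B)).compDer D₀)
  refine ⟨D, fun f => ?_⟩
  rw [aeval_genericZero, aeval_genericZero, hD]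
  exact congrArg (algebraMap B _) (Derivation.liftOfSurjective_apply _ hker f)

end DerivationsOfFunctionFields

section GenericKernels

lemma exists_eq_mul_of_forall_mulVec_eq_zero {K κ κ' ι : Type*} [Field K] [Fintype κ] [Fintype ι]
    {A : Matrix κ ι K} {B : Matrix κ' ι K} (h : ∀ c, A.mulVec c = 0 → B.mulVec c = 0) :
    ∃ L : Matrix κ' κ K, B = L * A := by
  have hrow (l : κ') : ∃ c : κ → K, ∑ k, c k • (LinearMap.proj k ∘ₗ A.mulVecLin) =
      LinearMap.proj l ∘ₗ B.mulVecLin :=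
    (Submodule.mem_span_range_iff_exists_fun K).1 (mem_span_of_iInf_ker_le_ker fun c hc =>
      congrFun (h c (_root_.funext fun k => (Submodule.mem_iInf _).1 hc k)) l)
  choose L hL using hrow
  refine ⟨Matrix.of L, Matrix.ext fun l i => ?_⟩
  simpa [Matrix.mul_apply] using (LinearMap.congr_fun (hL l) (Pi.single i 1)).symm

lemma exists_smul_sub_mul_mem_of_forall_mulVec_mem {σ k κ κ' ι : Type*} [Field k] [Fintype κ]
    [Finite κ'] [Fintype ι] {I : Ideal (MvPolynomial σ k)} [I.IsPrime]
    {A : Matrix κ ι (MvPolynomial σ k)} {B : Matrix κ' ι (MvPolynomial σ k)}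
    (h : ∀ c, (∀ l, A.mulVec c l ∈ I) → ∀ l, B.mulVec c l ∈ I) :
    ∃ w ∉ I, ∃ L : Matrix κ' κ (MvPolynomial σ k), ∀ l i, (w • B - L * A) l i ∈ I := by
  let ev := aeval (R := k) (genericZero I)
  have hev {F} : ev F = 0 ↔ F ∈ I := aeval_genericZero_eq_zero_iff
  have hker (z) (hz : (A.map ev).mulVec z = 0) : (B.map ev).mulVec z = 0 := by
    obtain ⟨w, hw, c, hc⟩ := exists_aeval_genericZero_eq_mul z
    have hmul (v : ι → MvPolynomial σ k) : ev (v ⬝ᵥ c) = ev w * ((fun i => ev (v i)) ⬝ᵥ z) := by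
      simp only [dotProduct, map_sum, map_mul, Finset.mul_sum]
      exact Finset.sum_congr rfl fun i _ => by rw [show ev (c i) = _ from hc i, mul_left_comm]
    ext l
    have hBc := hev.2 (h c (fun l => hev.1 ((hmul (A l)).trans ?_)) l)
    · exact (mul_eq_zero.1 ((hmul (B l)).symm.trans hBc)).resolve_left (mt hev.1 hw)
    · exact mul_eq_zero_of_right _ (congrFun hz l)
  obtain ⟨L, hL⟩ := exists_eq_mul_of_forall_mulVec_eq_zero hker
  obtain ⟨w, hw, U, hU⟩ := exists_aeval_genericZero_eq_mul fun e : κ' × κ => L e.1 e.2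
  refine ⟨w, hw, Matrix.of fun l l' => U (l, l'), fun l i => hev.1 ?_⟩
  have hBl := congrFun (congrFun hL l) i
  rw [Matrix.map_apply] at hBl
  simp only [Matrix.sub_apply, Matrix.smul_apply, smul_eq_mul, map_sub, map_mul, hBl,
    Matrix.mul_apply, map_sum, Matrix.of_apply, Matrix.map_apply, Finset.mul_sum]
  refine sub_eq_zero.2 (Finset.sum_congr rfl fun l' _ => ?_)
  rw [show ev (U (l, l')) = _ from hU (l, l'), mul_assoc]

lemma exists_notMem_forall_mulVec_map_eval_eq_zero {σ k κ κ' ι : Type*} [Field k] [Finite κ]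
    [Finite κ'] [Fintype ι] {I : Ideal (MvPolynomial σ k)} [I.IsPrime]
    {A : Matrix κ ι (MvPolynomial σ k)} {B : Matrix κ' ι (MvPolynomial σ k)}
    (h : ∀ c, (∀ l, A.mulVec c l ∈ I) → ∀ l, B.mulVec c l ∈ I) :
    ∃ w ∉ I, ∀ x : σ → k, (∀ f ∈ I, eval x f = 0) → eval x w ≠ 0 →
      ∀ c, (A.map (eval x)).mulVec c = 0 → (B.map (eval x)).mulVec c = 0 := by
  have := Fintype.ofFinite κ
  obtain ⟨w, hw, L, hL⟩ := exists_smul_sub_mul_mem_of_forall_mulVec_mem h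
  refine ⟨w, hw, fun x hx hwx c hc => ?_⟩
  have hBL : eval x w • B.map (eval x) = L.map (eval x) * A.map (eval x) := by
    rw [← Matrix.map_mul]
    ext l i
    simpa [sub_eq_zero] using hx _ (hL l i)
  refine (smul_eq_zero.1 ?_).resolve_left hwx
  rw [← Matrix.smul_mulVec, hBL, ← Matrix.mulVec_mulVec, hc, Matrix.mulVec_zero]

end GenericKernels

section TangentTupleFields

variable {N m : ℕ} {Y : Set (Fin N → ℂ)} {V : Fin m × Fin N → MvPolynomial (Fin m × Fin N) ℂ}

/-- A polynomial vector field on the space of `m`-tuples whose `i`-th component is, at every tuple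
of points of `Y`, tangent to `Y` at the `i`-th point. -/
def IsTangentTupleField (Y : Set (Fin N → ℂ))
    (V : Fin m × Fin N → MvPolynomial (Fin m × Fin N) ℂ) : Prop :=
  ∀ p : Fin m → Fin N → ℂ, (∀ i, p i ∈ Y) →
    ∀ i, (fun a => eval p.uncurry (V (i, a))) ∈ tanSpan Y (p i)

lemma IsTangentTupleField.mkDerivation_mem (hV : IsTangentTupleField Y V)
    {f : MvPolynomial (Fin m × Fin N) ℂ} (hf : f ∈ tupleIdeal m Y) :
    mkDerivation ℂ V f ∈ tupleIdeal m Y := by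
  refine mem_tupleIdeal_iff.2 fun p hp => ?_
  let y (i : Fin m) (e : Fin m × Fin N) : MvPolynomial (Fin N) ℂ :=
    if e.1 = i then X e.2 else C (p e.1 e.2)
  have hslice (i : Fin m) : bind₁ (y i) f ∈ vanishingIdeal ℂ Y :=
    mem_vanishingIdeal_iff_eval.2 fun x hx => by
      rw [← mem_tupleIdeal_iff.1 hf (Function.update p i x) fun k => by
        obtain rfl | hk := eq_or_ne k i <;> simp [*], eval, eval₂Hom_bind₁]
      congr 2
      ext ⟨k, a⟩
      obtain rfl | hk := eq_or_ne k i <;> simp [y, *]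
  have heval (i : Fin m) (G : MvPolynomial (Fin m × Fin N) ℂ) :
      eval (p i) (bind₁ (y i) G) = eval p.uncurry G := by
    rw [eval, eval₂Hom_bind₁]
    congr 2
    ext ⟨k, a⟩
    obtain rfl | hk := eq_or_ne k i <;> simp [y, *]
  have hpderiv (i : Fin m) (a : Fin N) :
      eval (p i) (pderiv a (bind₁ (y i) f)) = eval p.uncurry (pderiv (i, a) f) := by
    have hy (e : Fin m × Fin N) : pderiv a (y i e) = if e = (i, a) then 1 else 0 := by
      obtain ⟨k, b⟩ := e
      obtain rfl | hk := eq_or_ne k i <;> simp [y, pderiv_X, Pi.single_apply, *]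
    rw [bind₁, derivation_aeval, ← bind₁, map_sum]
    simp [hy, apply_ite (eval (p i)), heval]
  calc eval p.uncurry (mkDerivation ℂ V f)
      = ∑ i, differential (p i) (bind₁ (y i) f) fun a => eval p.uncurry (V (i, a)) := by
        rw [← aeval_X_left_apply f, derivation_aeval, map_sum, Fintype.sum_prod_type]
        simp [differential_apply, hpderiv, mul_comm]
    _ = 0 := Finset.sum_eq_zero fun i _ => mem_tanSpan_iff.1 (hV p hp i) _ (hslice i)

lemma rename_prodMk_mem_tupleIdeal {f : MvPolynomial (Fin N) ℂ} (hf : f ∈ vanishingIdeal ℂ Y)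
    (i : Fin m) : rename (Prod.mk i) f ∈ tupleIdeal m Y :=
  mem_tupleIdeal_iff.2 fun p hp => by
    rw [eval_rename]
    exact mem_vanishingIdeal_iff_eval.1 hf _ (hp i)

lemma IsTangentTupleField.apply_one_mem {j r : ℕ} (hY : IrrAlg Y) (hc : IsCone Y)
    (hr : ∀ p ∈ Y, p ≠ 0 → Module.finrank ℂ (tanSpan Y p) = r) (hnd : Nondeg Y)
    (hj : secant j Y ≠ Set.univ)
    {V : Fin (j + 2) × Fin N → MvPolynomial (Fin (j + 2) × Fin N) ℂ}
    (hV : IsTangentTupleField Y V)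
    (hsum : ∀ a, ∑ i : Fin (j + 1), V (i.succ, a) ∈ tupleIdeal (j + 2) Y)
    (h01 : ∀ a, V (1, a) + V (0, a) ∈ tupleIdeal (j + 2) Y) (a : Fin N) :
    V (1, a) ∈ tupleIdeal (j + 2) Y := by
  have hI := hY.isPrime_tupleIdeal (j + 2)
  obtain ⟨F, hF, p, hp, hpF⟩ := exists_mem_sumIdeal_differential_ne_zero hc.1 hj
  obtain ⟨D, hD⟩ := exists_derivation_aeval_genericZero_eq fun f => hV.mkDerivation_mem (f := f)
  let ξ := genericZero (tupleIdeal (j + 2) Y)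
  have hξ {G} : aeval ξ G = 0 ↔ G ∈ tupleIdeal (j + 2) Y := aeval_genericZero_eq_zero_iff
  have hDX (e) : D (ξ e) = aeval ξ (V e) := by simpa [ξ] using hD (X e)
  have hvanish (i : Fin (j + 2)) (f) (hf : f ∈ vanishingIdeal ℂ Y) :
      aeval (fun a => ξ (i, a)) f = 0 := by
    have := hξ.2 (rename_prodMk_mem_tupleIdeal hf i)
    rwa [aeval_rename] at this
  have hnotMem : ∑ a, sumGradient (j + 1) F a * (X (1, a) + X (0, a)) ∉ tupleIdeal (j + 2) Y := by
    have h1 := sum_sumGradient_mul_rename_mem hF (s := X)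
      (fun x hx => by simpa using hc.self_mem_tanSpan hx) 0
    simp only [rename_X, Fin.succ_zero_eq_one] at h1
    simp only [mul_add, Finset.sum_add_distrib]
    rw [(tupleIdeal (j + 2) Y).add_mem_iff_right h1]
    exact sum_sumGradient_mul_X_zero_notMem hnd hp hpF
  have hD0 := derivation_apply_eq_zero_of_add hY.1 hc hr D (hvanish 1) (hvanish 0)
    (h := fun a => aeval ξ (sumGradient (j + 1) F a)) ?_ ?_ ?_ ?_ a
  · rwa [hDX, hξ] at hD0
  · intro a
    rw [map_add, hDX, hDX, ← map_add]
    exact hξ.2 (h01 a)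
  · intro a
    rw [sumGradient, aeval_bind₁, derivation_aeval]
    refine Finset.sum_eq_zero fun b _ => ?_
    rw [map_sum, map_sum]
    simp only [aeval_X, hDX, ← map_sum, hξ.2 (hsum b), smul_zero]
  · intro s hs
    have := hξ.2 (sum_sumGradient_mul_rename_mem hF hs 0)
    simpa [aeval_rename, Function.comp_def] using this
  · simpa using mt hξ.1 hnotMem

end TangentTupleFields

section GenericTangentVectors

variable {N m : ℕ} {Y : Set (Fin N → ℂ)} {g : MvPolynomial (Fin N) ℂ}
  {S : Matrix (Fin N) (Fin N) (MvPolynomial (Fin N) ℂ)} {κ κ' : Type*}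

lemma generically_eval_ne_zero {x : Fin N → ℂ} (hx : x ∈ Y) (hg : eval x g ≠ 0) :
    Generically m Y fun p => ∀ i, eval (p i) g ≠ 0 := by
  refine generically_iff_exists_notMem_tupleIdeal.2 ⟨∏ i, rename (Prod.mk i) g,
    notMem_tupleIdeal_iff.2 ⟨fun _ => x, fun _ => hx, ?_⟩, fun p _ hp i => ?_⟩
  · rw [map_prod]
    refine Finset.prod_ne_zero_iff.2 fun i _ => ?_
    rwa [eval_rename]
  · rw [map_prod] at hp
    have := Finset.prod_ne_zero_iff.1 hp i (Finset.mem_univ i)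
    rwa [eval_rename] at this

/-- The matrix, over the polynomials in the coordinates of an `m`-tuple, that sends a tuple of
vectors to the linear combinations with coefficients `ε k` of their images under `S`, evaluated for
the `i`-th vector at the `i`-th point of the tuple. -/
def combinationMatrix (S : Matrix (Fin N) (Fin N) (MvPolynomial (Fin N) ℂ)) (ε : κ → Fin m → ℂ) :
    Matrix (κ × Fin N) (Fin m × Fin N) (MvPolynomial (Fin m × Fin N) ℂ) :=
  Matrix.of fun l e => C (ε l.1 e.1) * rename (Prod.mk e.1) (S l.2 e.2)

lemma combinationMatrix_mulVec_apply (ε : κ → Fin m → ℂ)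
    (c : Fin m × Fin N → MvPolynomial (Fin m × Fin N) ℂ) (k : κ) (a : Fin N) :
    (combinationMatrix S ε).mulVec c (k, a) =
      ∑ i, C (ε k i) * ∑ b, rename (Prod.mk i) (S a b) * c (i, b) := by
  simp [combinationMatrix, Matrix.mulVec, dotProduct, Fintype.sum_prod_type, Finset.mul_sum,
    mul_assoc]

lemma combinationMatrix_map_eval_mulVec_apply (ε : κ → Fin m → ℂ) (p : Fin m → Fin N → ℂ)
    (c : Fin m → Fin N → ℂ) (k : κ) (a : Fin N) :
    ((combinationMatrix S ε).map (eval p.uncurry)).mulVec c.uncurry (k, a) =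
      (∑ i, ε k i • (S.map (eval (p i))).mulVec (c i)) a := by
  have heval (i : Fin m) (f : MvPolynomial (Fin N) ℂ) :
      eval p.uncurry (rename (Prod.mk i) f) = eval (p i) f := eval_rename ..
  simp [combinationMatrix, Matrix.mulVec, dotProduct, Fintype.sum_prod_type, Finset.mul_sum,
    mul_assoc, heval]

lemma IsTangentProjector.isTangentTupleField (hS : IsTangentProjector Y g S)
    (c : Fin m × Fin N → MvPolynomial (Fin m × Fin N) ℂ) :
    IsTangentTupleField Y fun e => ∑ b, rename (Prod.mk e.1) (S e.2 b) * c (e.1, b) :=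
  fun p hp i => by
    have hsum := Submodule.sum_mem (tanSpan Y (p i)) fun b (_ : b ∈ Finset.univ) =>
      Submodule.smul_mem _ (eval p.uncurry (c (i, b))) (hS.isTangentField b _ (hp i))
    convert hsum using 1
    ext a
    have heval (b : Fin N) : eval p.uncurry (rename (Prod.mk i) (S a b)) = eval (p i) (S a b) :=
      eval_rename ..
    simp [heval, Matrix.col, mul_comm]

lemma generically_sum_smul_eq_zero_of_forall_isTangentTupleField {r : ℕ} [Finite κ] [Finite κ']
    (hY : IrrAlg Y) (hne : ∃ x ∈ Y, x ≠ 0)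
    (hr : ∀ p ∈ Y, p ≠ 0 → Module.finrank ℂ (tanSpan Y p) = r) {ε : κ → Fin m → ℂ}
    {ε' : κ' → Fin m → ℂ}
    (h : ∀ V, IsTangentTupleField Y V →
      (∀ k a, ∑ i, C (ε k i) * V (i, a) ∈ tupleIdeal m Y) →
        ∀ k a, ∑ i, C (ε' k i) * V (i, a) ∈ tupleIdeal m Y) :
    Generically m Y fun p => ∀ v : Fin m → Fin N → ℂ, (∀ i, v i ∈ tanSpan Y (p i)) →
      (∀ k, ∑ i, ε k i • v i = 0) → ∀ k, ∑ i, ε' k i • v i = 0 := by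
  obtain ⟨x, hx, hx0⟩ := hne
  obtain ⟨g, S, hS, hgx⟩ := exists_isTangentProjector hr hx hx0
  have hI := hY.isPrime_tupleIdeal m
  obtain ⟨w, hw, hεε'⟩ := exists_notMem_forall_mulVec_map_eval_eq_zero
    (A := combinationMatrix S ε) (B := combinationMatrix S ε') (I := tupleIdeal m Y)
    fun c hc => by
      have hV := h _ (hS.isTangentTupleField c) fun k a => by
        simpa only [combinationMatrix_mulVec_apply] using hc (k, a)
      rintro ⟨k, a⟩
      simpa only [combinationMatrix_mulVec_apply] using hV k a
  refine ((generically_eval_ne_zero hx hgx).and hY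
    (generically_iff_exists_notMem_tupleIdeal.2 ⟨w, hw, fun p hp hwp => hεε' _
      (fun f hf => mem_tupleIdeal_iff.1 hf p fun i => (hp i).1) hwp⟩)).mono ?_
  rintro p - ⟨hgp, hεε'p⟩ v hv hεv k
  have hSv (i : Fin m) : (S.map (eval (p i))).mulVec ((eval (p i) g)⁻¹ • v i) = v i := by
    rw [Matrix.mulVec_smul, show (S.map (eval (p i))).mulVec (v i) = eval (p i) g • v i from
      hS.mulVec_eq_smul fun f hf =>
        (differential_apply (p i) (v i) f).symm.trans (mem_tanSpan_iff.1 (hv i) f hf),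
      inv_smul_smul₀ (hgp i)]
  have hvanish := hεε'p (Function.uncurry fun i => (eval (p i) g)⁻¹ • v i) ?_
  · ext a
    simpa only [combinationMatrix_map_eval_mulVec_apply, hSv, Pi.zero_apply] using
      congrFun hvanish (k, a)
  · ext ⟨k, a⟩
    rw [combinationMatrix_map_eval_mulVec_apply]
    simp only [hSv, hεv, Pi.zero_apply]

lemma generically_tanSpan_inf_inf_eq_bot {j r : ℕ} (hY : IrrAlg Y) (hc : IsCone Y)
    (hne : ∃ x ∈ Y, x ≠ 0) (hr : ∀ p ∈ Y, p ≠ 0 → Module.finrank ℂ (tanSpan Y p) = r)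
    (hnd : Nondeg Y) (hj : secant j Y ≠ Set.univ) :
    Generically (j + 2) Y fun p =>
      tanSpan Y (p 0) ⊓ tanSpan Y (p 1) ⊓ ⨆ i : Fin j, tanSpan Y (p i.succ.succ) = ⊥ := by
  let ε : Fin 2 → Fin (j + 2) → ℂ := ![Fin.cons 0 1, Fin.cons 1 (Fin.cons 1 0)]
  let ε' : Unit → Fin (j + 2) → ℂ := fun _ => Pi.single 1 1
  refine (generically_sum_smul_eq_zero_of_forall_isTangentTupleField hY hne hr (ε := ε) (ε' := ε')
    fun V hV hVε _ a => ?_).mono fun p _ hp => ?_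
  · have := hV.apply_one_mem hY hc hr hnd hj
      (fun a => by simpa [ε, Fin.sum_univ_succ] using hVε 0 a)
      (fun a => by simpa [ε, Fin.sum_univ_succ, add_comm] using hVε 1 a) a
    simpa [ε', Pi.single_apply] using this
  · refine (Submodule.eq_bot_iff _).2 fun v ⟨⟨hv0, hv1⟩, hv⟩ => ?_
    obtain ⟨u, hu, huv⟩ := (Submodule.mem_iSup_iff_exists_finsupp _ _).1 hv
    rw [Finsupp.sum_fintype _ _ fun _ => rfl] at huv
    have hp1 := hp (Fin.cons v (Fin.cons (-v) u))
      (Fin.cases hv0 (Fin.cases (Submodule.neg_mem _ hv1) hu))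
      (by
        rw [Fin.forall_fin_two]
        constructor <;> simp [ε, Fin.sum_univ_succ, huv]) ()
    simpa [ε', Pi.single_apply] using hp1

end GenericTangentVectors

section ContactDimensions

open Module

lemma finrank_inf_add_finrank_inf_le {k V : Type*} [DivisionRing k] [AddCommGroup V] [Module k V]
    [FiniteDimensional k V] {A B C : Submodule k V} (h : A ⊓ B ⊓ C = ⊥) :
    finrank k (A ⊓ C : Submodule k V) + finrank k (A ⊓ B : Submodule k V) ≤
      finrank k (A ⊓ (B ⊔ C) : Submodule k V) := by
  have hbot : (A ⊓ C) ⊓ (A ⊓ B) = ⊥ := by rw [inf_comm, inf_inf_inf_comm, inf_idem, ← inf_assoc, h]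
  rw [← Submodule.finrank_sup_add_finrank_inf_eq, hbot, finrank_bot, add_zero]
  exact Submodule.finrank_mono
    (sup_le (inf_le_inf_left A le_sup_right) (inf_le_inf_left A le_sup_left))

variable {N r j : ℕ} {Y : Set (Fin N → ℂ)}

lemma lt_affDim_of_pdim_eq {n : ℕ} (hY : IrrAlg Y) (hc : IsCone Y) (h0 : Y ≠ {0})
    (hdim : pdim Y = nn n) : n < affDim Y := by
  have hpos := affDim_pos hY hc h0
  by_contra! hle
  have hpdim := hdim ▸ pdim_le (S := Y) (d := n - 1) fun T hT _ _ hTY => by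
    have := affDim_mono hT hY hTY
    omega
  rw [nn, nn, WithBot.coe_le_coe, ENat.natCast_le_natCast] at hpdim
  omega

lemma exists_generically_finrank_contactSpace_eq (hY : IrrAlg Y) (hne : ∃ x ∈ Y, x ≠ 0)
    (hr : ∀ p ∈ Y, p ≠ 0 → finrank ℂ (tanSpan Y p) = r) (j : ℕ) :
    ∃ e, Generically (j + 1) Y fun p =>
      finrank ℂ (contactSpace Y p) = e ∧
      ∀ q : Fin (j + 1) → Fin N → ℂ, (∀ i, q i ∈ Y ∧ q i ≠ 0) →
        finrank ℂ (⨆ i, tanSpan Y (q i) : Submodule ℂ (Fin N → ℂ)) ≤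
          finrank ℂ (⨆ i, tanSpan Y (p i) : Submodule ℂ (Fin N → ℂ)) := by
  obtain ⟨d, -, hd⟩ := exists_generically_finrank_iSup_tanSpan_eq hne hr j
  obtain ⟨d', hd'le, hd'⟩ := exists_generically_finrank_iSup_tanSpan_eq hne hr (j + 1)
  refine ⟨r + d - d', ((hd.comp_injective (hne.imp fun _ h => h.1)
    (Fin.succ_injective j)).and hY hd').mono ?_⟩
  rintro p hp ⟨hpd, hpd'⟩
  refine ⟨?_, fun q hq => (hd'le q hq).trans_eq hpd'.symm⟩
  rw [iSup_fin_succ] at hpd'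
  have hgrassmann := Submodule.finrank_sup_add_finrank_inf_eq (tanSpan Y (p 0))
    (⨆ i : Fin j, tanSpan Y (p i.succ))
  rw [hpd, hpd', hr _ (hp 0).1 (hp 0).2] at hgrassmann
  exact Nat.eq_sub_of_add_eq' hgrassmann

lemma generically_notMem_iSup_tanSpan (hc : IsCone Y) (hnd : Nondeg Y)
    (hj : secant j Y ≠ Set.univ) :
    Generically (j + 2) Y fun p => p 0 ∉ ⨆ i : Fin (j + 1), tanSpan Y (p i.succ) := by
  obtain ⟨F, hF, q, hq, hqF⟩ := exists_mem_sumIdeal_differential_ne_zero hc.1 hj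
  refine generically_iff_exists_notMem_tupleIdeal.2
    ⟨_, sum_sumGradient_mul_X_zero_notMem hnd hq hqF, fun p hp hFp hmem => hFp ?_⟩
  have hle : ⨆ i : Fin (j + 1), tanSpan Y (p i.succ) ≤
      LinearMap.ker (differential (∑ i : Fin (j + 1), p i.succ) F) :=
    iSup_le fun i v hv => differential_sum_apply_eq_zero hF (fun i => (hp i.succ).1) hv
  rw [eval_sum_sumGradient_mul]
  simpa using hle hmem

lemma finrank_contactSpace_lt (hc : IsCone Y) {p : Fin (j + 1) → Fin N → ℂ} (hp : p 0 ∈ Y)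
    (hp0 : p 0 ∉ ⨆ i : Fin j, tanSpan Y (p i.succ)) :
    finrank ℂ (contactSpace Y p) < finrank ℂ (tanSpan Y (p 0)) :=
  Submodule.finrank_lt_finrank_of_lt (inf_lt_left.2 fun h => hp0 (h (hc.self_mem_tanSpan hp)))

lemma add_le_of_generically_finrank_contactSpace_eq (hY : IrrAlg Y) (hc : IsCone Y)
    (hne : ∃ x ∈ Y, x ≠ 0) (hr : ∀ p ∈ Y, p ≠ 0 → finrank ℂ (tanSpan Y p) = r) (hnd : Nondeg Y)
    (hj : secant j Y ≠ Set.univ) {ψ : ℕ → ℕ}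
    (hψ : ∀ m, Generically (m + 1) Y fun p =>
      finrank ℂ (contactSpace Y p) = ψ m) :
    ψ j + ψ 1 ≤ ψ (j + 1) := by
  have hne' : Y.Nonempty := hne.imp fun _ h => h.1
  obtain ⟨p, -, ⟨⟨hbot, hp1⟩, hpj⟩, hpj'⟩ :=
    ((((generically_tanSpan_inf_inf_eq_bot hY hc hne hr hnd hj).and hY
      ((hψ 1).comp_injective hne' (Fin.castLE_injective (Nat.le_add_left 2 j)))).and hY
      ((hψ j).comp_injective hne' (Fin.succAbove_right_injective (p := (1 : Fin (j + 2)))))).and hY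
      (hψ (j + 1))).exists_tuple hY hne
  have hspace1 : contactSpace Y (fun i => p (Fin.castLE (Nat.le_add_left 2 j) i)) =
      tanSpan Y (p 0) ⊓ tanSpan Y (p 1) := congrArg (tanSpan Y (p 0) ⊓ ·) (iSup_unique _)
  have hspace : contactSpace Y (fun i => p (Fin.succAbove 1 i)) =
      tanSpan Y (p 0) ⊓ ⨆ i : Fin j, tanSpan Y (p i.succ.succ) := by
    simp only [contactSpace, Fin.one_succAbove_zero, Fin.one_succAbove_succ]
  have hspace' : contactSpace Y p =
      tanSpan Y (p 0) ⊓ (tanSpan Y (p 1) ⊔ ⨆ i : Fin j, tanSpan Y (p i.succ.succ)) :=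
    congrArg (tanSpan Y (p 0) ⊓ ·) (iSup_fin_succ _)
  rw [← hp1, ← hpj, ← hpj', hspace1, hspace, hspace']
  exact finrank_inf_add_finrank_inf_le hbot

lemma generically_pdim_psiLocus_eq (hY : IrrAlg Y) (hc : IsCone Y)
    (hr : ∀ p ∈ Y, p ≠ 0 → finrank ℂ (tanSpan Y p) = r) (hnd : Nondeg Y) (hdim : r ≤ affDim Y)
    (hj : secant j Y ≠ Set.univ) {e : ℕ}
    (he : Generically (j + 2) Y fun p => finrank ℂ (contactSpace Y p) = e ∧
      ∀ q : Fin (j + 2) → Fin N → ℂ, (∀ i, q i ∈ Y ∧ q i ≠ 0) →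
        finrank ℂ (⨆ i, tanSpan Y (q i) : Submodule ℂ (Fin N → ℂ)) ≤
          finrank ℂ (⨆ i, tanSpan Y (p i) : Submodule ℂ (Fin N → ℂ))) :
    Generically (j + 2) Y fun p => pdim (PsiLocus Y p) = nn e :=
  ((generically_notMem_iSup_tanSpan hc hnd hj).and hY he).mono fun _ hp ⟨hp0, hpe, hmax⟩ =>
    hpe ▸ pdim_psiLocus hY hc hr hdim hp hp0 hmax

lemma lt_of_generically_finrank_contactSpace_eq (hY : IrrAlg Y) (hc : IsCone Y)
    (hne : ∃ x ∈ Y, x ≠ 0) (hr : ∀ p ∈ Y, p ≠ 0 → finrank ℂ (tanSpan Y p) = r) (hnd : Nondeg Y)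
    (hj : secant j Y ≠ Set.univ) {e : ℕ}
    (he : Generically (j + 2) Y fun p => finrank ℂ (contactSpace Y p) = e) : e < r := by
  obtain ⟨p, hp, hp0, rfl⟩ :=
    ((generically_notMem_iSup_tanSpan hc hnd hj).and hY he).exists_tuple hY hne
  exact (finrank_contactSpace_lt hc (hp 0).1 hp0).trans_eq (hr _ (hp 0).1 (hp 0).2)

end ContactDimensions

/-- Palatini–Zak subadditivity: for a smooth irreducible
non-degenerate `X` with `k₀ = min {k : S^k(X) = ℙ^r}`, the projection defects
satisfy `ψ_1 ≤ ψ_2 ≤ ⋯ ≤ ψ_{k₀} ≤ n`, `ψ_k ≥ ψ_{k-1} + ψ_1` and `ψ_k ≥ k ψ_1`. -/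
theorem subadditivity (r n k₀ : ℕ) (hk₀ : 1 ≤ k₀) (X : Set (Fin (r+1) → ℂ))
    (hX : IrrAlg X) (hc : IsCone X) (hne : X ≠ {0}) (hnd : Nondeg X)
    (hdim : pdim X = nn n)
    (hsm : ∀ x ∈ X, x ≠ 0 → IsSmoothAt X n x)
    (hfill : secant k₀ X = Set.univ) (hmin : ∀ j < k₀, secant j X ≠ Set.univ) :
    ∃ ψ : ℕ → ℕ,
      (∀ j, 1 ≤ j → j ≤ k₀ →
        Generically (j+1) X fun p => pdim (PsiLocus X p) = nn (ψ j)) ∧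
      (∀ j j', 1 ≤ j → j ≤ j' → j' ≤ k₀ → ψ j ≤ ψ j') ∧
      ψ k₀ ≤ n ∧
      (∀ j, 2 ≤ j → j ≤ k₀ → ψ (j-1) + ψ 1 ≤ ψ j) ∧
      (∀ j, 1 ≤ j → j ≤ k₀ → j * ψ 1 ≤ ψ j) := by
  have hX0 := hc.exists_mem_ne_zero hne
  choose ψ hψ using exists_generically_finrank_contactSpace_eq hX hX0 hsm
  have hrank (m) := (hψ m).mono fun _ _ hp => hp.1
  have hadd (j : ℕ) (hj : j + 1 ≤ k₀) : ψ j + ψ 1 ≤ ψ (j + 1) :=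
    add_le_of_generically_finrank_contactSpace_eq hX hc hX0 hsm hnd (hmin j hj) hrank
  have hmul (j : ℕ) (hj : j ≤ k₀) : j * ψ 1 ≤ ψ j := by
    induction j with
    | zero => simp
    | succ j ih =>
      exact (j.succ_mul _).trans_le ((Nat.add_le_add_right (ih (by omega)) _).trans (hadd j hj))
  refine ⟨ψ, fun j hj hjk => ?_, fun j j' _ hjj' => ?_, ?_, fun j hj hjk => ?_, fun j _ => hmul j⟩
  · obtain ⟨j, rfl⟩ := Nat.exists_eq_add_of_le' hj
    exact generically_pdim_psiLocus_eq hX hc hsm hnd (lt_affDim_of_pdim_eq hX hc hne hdim)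
      (hmin j hjk) (hψ (j + 1))
  · induction j', hjj' using Nat.le_induction with
    | base => exact fun _ => le_rfl
    | succ i _ ih => exact fun hi => (ih (by omega)).trans (le_of_add_le_left (hadd i hi))
  · obtain ⟨j, rfl⟩ := Nat.exists_eq_add_of_le' hk₀
    exact Nat.lt_succ_iff.1 (lt_of_generically_finrank_contactSpace_eq hX hc hX0 hsm hnd
      (hmin j j.lt_succ_self) (hrank (j + 1)))
  · obtain ⟨j, rfl⟩ := Nat.exists_eq_add_of_le' hj
    exact hadd (j + 1) hjk
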